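/- arXiv:1911.06429 — 7 statements merged into one kernel-verified Lean document; each statement's English description precedes it below -/
import Mathlib

section
/- Let $1<p<\infty$ and let $g:\mathbb{R}\to\mathbb{R}$ be a $2\pi$-periodic measurable function with $\int_0^{2\pi}|g(\theta)|^p\,d\theta<\infty$. Define its Poisson extension on the radius by $f(r)=\frac{1}{2\pi}\int_0^{2\pi}\frac{1-r^2}{1-2r\cos\theta+r^2}\,g(\theta)\,d\theta$ for $-1<r<1$. Then $\int_{-1}^{1}|f(r)|^p\,dr\le \frac{1}{2\cos^p\frac{\pi}{2p}}\int_0^{2\pi}|g(\theta)|^p\,d\theta$. -/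
/-!
The inequality is a sharp Schur test for the Poisson kernel `P(r, θ)`, seen as a positive kernel
between the circle and the diameter. Put `a = 1/p` and `A = 1 / cos (π a / 2)`. The test
functions are `(2 |sin θ|) ^ (-a)` on the circle and `(1 - r²) ^ (-a)` on the diameter, and the two
estimates are

* `∫ P(r, θ) (2 |sin θ|) ^ (-a) dθ ≤ 2 π A (1 - r²) ^ (-a)` (`schur_boundary`),
* `∫ P(r, θ) (1 - r²) ^ (a - 1) dr ≤ π A (2 |sin θ|) ^ (a - 1)` (`schur_diameter`).

Hölder's inequality with the first estimate, then Tonelli and the second one, give the constant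
`(2 π)⁻¹ A ^ (p - 1) · π A = A ^ p / 2`.

Both estimates come from one principle (`lintegral_diamKernel_mul_norm_rpow_le`): if `h` is
holomorphic in the disk with positive real part and `|c| < 1`, then `Re (h ^ c)` is a positive
harmonic function which is at least `|h| ^ c cos (π c / 2)` on the circle and at most `|h| ^ c` on
the diameter; the Poisson formula on dilated disks and Fatou's lemma compare the two. The first
estimate is the case `h = 1 - z²`, `c = -a`. For the second one, take
`h = (1 - z²) / (1 + z²)`, `c = a`, for which `|h| = |tan α|` on the circle. The substitution
`r = cos α / (1 + sin α)` turns the integral over the diameter into one over the half circle, and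
moves the boundary point `θ` to the point `cos θ / (1 + |sin θ|)` of the diameter; the integrand is
then dominated by the Poisson kernel times `|tan α| ^ a`, because `|cos α| ≤ 1 + sin α`.
-/

open MeasureTheory Real

/-! ### The Poisson kernel on the diameter -/

/-- The Poisson kernel of the unit disk at a point `r` of the real diameter. -/
noncomputable def diamKernel (r θ : ℝ) : ℝ := (1 - r ^ 2) / (1 - 2 * r * cos θ + r ^ 2)

lemma diamKernel_denom_pos {r : ℝ} (hr : r ∈ Set.Ioo (-1 : ℝ) 1) (θ : ℝ) :
    0 < 1 - 2 * r * cos θ + r ^ 2 := by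
  obtain ⟨h1, h2⟩ := hr
  have h3 := neg_one_le_cos θ
  have h4 := cos_le_one θ
  rcases le_total 0 r with h | h
  · nlinarith [mul_nonneg h (sub_nonneg.2 h4), sq_pos_of_pos (sub_pos.2 h2)]
  · nlinarith [mul_nonneg (neg_nonneg.2 h) (by linarith : 0 ≤ 1 + cos θ),
      sq_pos_of_pos (by linarith : 0 < 1 + r)]

lemma diamKernel_pos {r : ℝ} (hr : r ∈ Set.Ioo (-1 : ℝ) 1) (θ : ℝ) : 0 < diamKernel r θ := by
  refine div_pos ?_ (diamKernel_denom_pos hr θ)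
  nlinarith [hr.1, hr.2]

lemma continuous_diamKernel {r : ℝ} (hr : r ∈ Set.Ioo (-1 : ℝ) 1) :
    Continuous (diamKernel r) := by
  unfold diamKernel
  exact Continuous.div (by fun_prop) (by fun_prop) fun θ => (diamKernel_denom_pos hr θ).ne'

lemma measurable_diamKernel : Measurable (fun x : ℝ × ℝ => diamKernel x.1 x.2) := by
  unfold diamKernel
  fun_prop

lemma poissonKernel_circleMap (r θ : ℝ) :
    poissonKernel 0 (r : ℂ) (circleMap 0 1 θ) = diamKernel r θ := by
  have h : ‖circleMap 0 1 θ - (r : ℂ)‖ ^ 2 = 1 - 2 * r * cos θ + r ^ 2 := by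
    rw [← Complex.normSq_eq_norm_sq, Complex.normSq_apply]
    simp [circleMap, Complex.exp_re, Complex.exp_im]
    nlinarith [sin_sq_add_cos_sq θ]
  rw [poissonKernel_def, diamKernel]
  simp only [sub_zero, h]
  simp

/-! ### Powers of functions with positive real part -/

/-- `w ^ c` has real part `‖w‖ ^ c * cos (c * arg w)`, and `|arg w| ≤ π / 2` in the closed right
half-plane. -/
lemma re_cpow_ge {w : ℂ} (hw : 0 ≤ w.re) (hw0 : w ≠ 0) {c : ℝ} (hc : |c| ≤ 1) :
    ‖w‖ ^ c * cos (π * c / 2) ≤ (w ^ (c : ℂ)).re := by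
  have harg : |w.arg| ≤ π / 2 := Complex.abs_arg_le_pi_div_two_iff.2 hw
  have key : (w ^ (c : ℂ)).re = ‖w‖ ^ c * cos (w.arg * c) := by
    rw [Complex.cpow_def_of_ne_zero hw0, Complex.exp_re]
    simp [Complex.log_re, Complex.log_im, rpow_def_of_pos (norm_pos_iff.2 hw0)]
  rw [key]
  refine mul_le_mul_of_nonneg_left ?_ (by positivity)
  rw [← cos_abs (w.arg * c), ← cos_abs (π * c / 2), abs_mul, abs_div, abs_mul, abs_of_pos pi_pos,
    abs_two]
  apply cos_le_cos_of_nonneg_of_le_pi (by positivity)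
  · nlinarith [pi_pos, abs_nonneg c]
  · nlinarith [abs_nonneg c]

/-- A holomorphic function with nonnegative real part dominates the Poisson integral of its boundary
values, as far as these exist almost everywhere. This is the Poisson formula for `F (R z)` with
`R < 1`, followed by Fatou's lemma as `R → 1`. -/
lemma lintegral_diamKernel_mul_re_le {F : ℂ → ℂ} (hF : DifferentiableOn ℂ F (Metric.ball 0 1))
    (hF0 : ∀ z ∈ Metric.ball (0 : ℂ) 1, 0 ≤ (F z).re)
    (hFc : ∀ᵐ θ : ℝ, ContinuousAt F (circleMap 0 1 θ)) {r : ℝ} (hr : r ∈ Set.Ioo (-1 : ℝ) 1) :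
    ∫⁻ θ in Set.Ioc 0 (2 * π), ENNReal.ofReal (diamKernel r θ * (F (circleMap 0 1 θ)).re) ≤
      ENNReal.ofReal (2 * π * (F r).re) := by
  set R : ℕ → ℝ := fun n => 1 - 1 / ((n : ℝ) + 2) with hR
  have hR0 : ∀ n, 0 ≤ R n := fun n => by
    have : 1 / ((n : ℝ) + 2) ≤ 1 := by
      rw [div_le_one (by positivity)]; linarith [(Nat.cast_nonneg n : (0 : ℝ) ≤ n)]
    simp only [hR]; linarith
  have hR1 : ∀ n, R n < 1 := fun n => by
    have : 0 < 1 / ((n : ℝ) + 2) := by positivity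
    simp only [hR]; linarith
  have hRlim : Filter.Tendsto R Filter.atTop (nhds 1) := by
    have h := (tendsto_one_div_add_atTop_nhds_zero_nat (𝕜 := ℝ)).comp (Filter.tendsto_add_atTop_nat 1)
    have h2 := h.const_sub 1
    rw [sub_zero] at h2
    refine h2.congr fun n => ?_
    simp only [hR, Function.comp]
    push_cast
    ring_nf
  have hRlimC : Filter.Tendsto (fun n => (R n : ℂ)) Filter.atTop (nhds 1) := by
    simpa [Function.comp_def] using (Complex.continuous_ofReal.tendsto 1).comp hRlim
  have hmem : ∀ n, ∀ z : ℂ, ‖z‖ ≤ 1 → (R n : ℂ) * z ∈ Metric.ball (0 : ℂ) 1 := fun n z hz => by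
    rw [mem_ball_zero_iff, norm_mul, Complex.norm_real, Real.norm_of_nonneg (hR0 n)]
    nlinarith [hR0 n, hR1 n, norm_nonneg z]
  have hcirc : ∀ θ, ‖circleMap 0 1 θ‖ = 1 := fun θ => by simp
  have hrball : (r : ℂ) ∈ Metric.ball (0 : ℂ) 1 := by
    rw [mem_ball_zero_iff, Complex.norm_real, Real.norm_eq_abs, abs_lt]; exact hr
  have hcont : ∀ n, Continuous fun θ : ℝ => F (R n * circleMap 0 1 θ) := fun n =>
    hF.continuousOn.comp_continuous (by fun_prop) fun θ => hmem n _ (hcirc θ).le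
  have hnn : ∀ n θ, 0 ≤ (F (R n * circleMap 0 1 θ)).re := fun n θ =>
    hF0 _ (hmem n _ (hcirc θ).le)
  have hcontK : ∀ n, Continuous fun θ : ℝ => diamKernel r θ * (F (R n * circleMap 0 1 θ)).re :=
    fun n => (continuous_diamKernel hr).mul (Complex.continuous_re.comp (hcont n))
  -- Poisson formula for the dilated function `F (R n * ·)`
  have hpois : ∀ n, ∫⁻ θ in Set.Ioc 0 (2 * π),
      ENNReal.ofReal (diamKernel r θ * (F (R n * circleMap 0 1 θ)).re) =
      ENNReal.ofReal (2 * π * (F (R n * r)).re) := fun n => by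
    have hd : DiffContOnCl ℂ (fun z => F (R n * z)) (Metric.ball 0 1) := by
      apply DifferentiableOn.diffContOnCl
      rw [closure_ball _ one_ne_zero]
      refine hF.comp (by fun_prop) fun z hz => hmem n z (by simpa using hz)
    have h := hd.circleAverage_poissonKernel_smul hrball
    rw [Real.circleAverage_def] at h
    have hci : Continuous fun θ : ℝ => (diamKernel r θ : ℂ) * F (R n * circleMap 0 1 θ) :=
      (Complex.continuous_ofReal.comp (continuous_diamKernel hr)).mul (hcont n)
    have h2 : ∫ θ in (0 : ℝ)..2 * π, diamKernel r θ * (F (R n * circleMap 0 1 θ)).re =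
        2 * π * (F (R n * r)).re := by
      rw [← h]
      have : ∀ θ, (poissonKernel 0 (r : ℂ) • fun z => F (R n * z)) (circleMap 0 1 θ) =
          (diamKernel r θ : ℂ) * F (R n * circleMap 0 1 θ) := fun θ => by
        simp only [Pi.smul_apply', poissonKernel_circleMap, Complex.real_smul]
      simp only [this]
      rw [Complex.smul_re, ← Complex.reCLM_apply, ← Complex.reCLM.intervalIntegral_comp_comm
        (hci.intervalIntegrable _ _)]
      simp only [Complex.reCLM_apply, Complex.re_ofReal_mul, smul_eq_mul]
      field_simp
    rw [← h2, intervalIntegral.integral_of_le (by positivity),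
      ofReal_integral_eq_lintegral_ofReal]
    · exact ((hcontK n).intervalIntegrable 0 (2 * π)).1
    · exact Filter.Eventually.of_forall fun θ => mul_nonneg (diamKernel_pos hr θ).le (hnn n θ)
  have hfat := lintegral_liminf_le (μ := volume.restrict (Set.Ioc 0 (2 * π)))
    (u := Filter.atTop)
    (f := fun n θ => ENNReal.ofReal (diamKernel r θ * (F (R n * circleMap 0 1 θ)).re))
    (fun n => (hcontK n).measurable.ennreal_ofReal)
  have hright : Filter.Tendsto (fun n => ENNReal.ofReal (2 * π * (F (R n * r)).re)) Filter.atTop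
      (nhds (ENNReal.ofReal (2 * π * (F r).re))) := by
    have hca : ContinuousAt F r := (hF.differentiableAt (Metric.isOpen_ball.mem_nhds hrball)).continuousAt
    have h1 : Filter.Tendsto (fun n => (R n : ℂ) * r) Filter.atTop (nhds (r : ℂ)) := by
      simpa using hRlimC.mul_const (r : ℂ)
    have h2 := (Complex.continuous_re.tendsto _).comp (hca.tendsto.comp h1)
    exact ENNReal.tendsto_ofReal (h2.const_mul _)
  simp only [hpois, hright.liminf_eq] at hfat
  refine le_trans (lintegral_mono_ae ?_) hfat
  refine ae_restrict_of_ae ?_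
  filter_upwards [hFc] with θ hθ
  have h1 : Filter.Tendsto (fun n => (R n : ℂ) * circleMap 0 1 θ) Filter.atTop
      (nhds (circleMap 0 1 θ)) := by
    simpa using hRlimC.mul_const (circleMap 0 1 θ)
  have h2 := (Complex.continuous_re.tendsto _).comp (hθ.tendsto.comp h1)
  exact (ENNReal.tendsto_ofReal (h2.const_mul (diamKernel r θ))).liminf_eq.ge

/-- The source of both Schur estimates: the harmonic function `Re (h ^ c)` is at least
`cos (π c / 2) ‖h‖ ^ c` on the circle and at most `‖h‖ ^ c` on the diameter. -/
lemma lintegral_diamKernel_mul_norm_rpow_le {h : ℂ → ℂ}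
    (hd : DifferentiableOn ℂ h (Metric.ball 0 1))
    (hpos : ∀ z ∈ Metric.ball (0 : ℂ) 1, 0 < (h z).re)
    (hbd : ∀ᵐ θ : ℝ, ContinuousAt h (circleMap 0 1 θ) ∧ h (circleMap 0 1 θ) ∈ Complex.slitPlane ∧
      0 ≤ (h (circleMap 0 1 θ)).re)
    {c : ℝ} (hc : |c| < 1) {r : ℝ} (hr : r ∈ Set.Ioo (-1 : ℝ) 1) :
    ∫⁻ θ in Set.Ioc 0 (2 * π), ENNReal.ofReal (diamKernel r θ * ‖h (circleMap 0 1 θ)‖ ^ c) ≤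
      ENNReal.ofReal (2 * π * (cos (π * c / 2))⁻¹ * ‖h r‖ ^ c) := by
  have hcos : 0 < cos (π * c / 2) := by
    apply cos_pos_of_mem_Ioo
    rw [abs_lt] at hc
    constructor <;> nlinarith [pi_pos]
  have hne : ∀ z ∈ Metric.ball (0 : ℂ) 1, h z ≠ 0 := fun z hz h0 => by
    have := hpos z hz
    simp [h0] at this
  have hrball : (r : ℂ) ∈ Metric.ball (0 : ℂ) 1 := by
    rw [mem_ball_zero_iff, Complex.norm_real, Real.norm_eq_abs, abs_lt]; exact hr
  have key := lintegral_diamKernel_mul_re_le (F := fun z => h z ^ (c : ℂ)) ?_ ?_ ?_ hr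
  · calc _ ≤ ∫⁻ θ in Set.Ioc 0 (2 * π), ENNReal.ofReal (cos (π * c / 2))⁻¹ *
          ENNReal.ofReal (diamKernel r θ * (h (circleMap 0 1 θ) ^ (c : ℂ)).re) := by
          refine lintegral_mono_ae (ae_restrict_of_ae ?_)
          filter_upwards [hbd] with θ hθ
          rw [← ENNReal.ofReal_mul (by positivity)]
          apply ENNReal.ofReal_le_ofReal
          have h1 := re_cpow_ge hθ.2.2 (Complex.slitPlane_ne_zero hθ.2.1) hc.le
          have h2 := mul_le_mul_of_nonneg_left h1 (diamKernel_pos hr θ).le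
          rw [inv_mul_eq_div, le_div_iff₀ hcos]
          linarith
      _ = ENNReal.ofReal (cos (π * c / 2))⁻¹ * ∫⁻ θ in Set.Ioc 0 (2 * π),
          ENNReal.ofReal (diamKernel r θ * (h (circleMap 0 1 θ) ^ (c : ℂ)).re) :=
          lintegral_const_mul' _ _ ENNReal.ofReal_ne_top
      _ ≤ ENNReal.ofReal (cos (π * c / 2))⁻¹ * ENNReal.ofReal (2 * π * (h r ^ (c : ℂ)).re) := by
          gcongr
      _ ≤ _ := by
          rw [← ENNReal.ofReal_mul (by positivity)]
          apply ENNReal.ofReal_le_ofReal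
          have h1 : (h r ^ (c : ℂ)).re ≤ ‖h r‖ ^ c := by
            refine (Complex.re_le_norm _).trans ?_
            rw [Complex.norm_cpow_of_ne_zero (hne r hrball)]
            simp
          calc _ ≤ (cos (π * c / 2))⁻¹ * (2 * π * ‖h r‖ ^ c) := by gcongr
            _ = _ := by ring
  · exact hd.cpow_const fun z hz => Or.inl (hpos z hz)
  · intro z hz
    exact le_trans (by positivity) (re_cpow_ge (hpos z hz).le (hne z hz) hc.le)
  · filter_upwards [hbd] with θ hθ
    exact ContinuousAt.cpow hθ.1 continuousAt_const hθ.2.1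

/-! ### The two holomorphic functions on the circle -/

lemma ae_sin_ne_zero : ∀ᵐ θ : ℝ, sin θ ≠ 0 := by
  have : {θ : ℝ | sin θ = 0}.Countable := by
    refine (Set.countable_range fun n : ℤ => (n : ℝ) * π).mono fun θ hθ => ?_
    exact sin_eq_zero_iff.1 hθ
  exact this.ae_notMem volume

lemma ae_cos_ne_zero : ∀ᵐ θ : ℝ, cos θ ≠ 0 := by
  have : {θ : ℝ | cos θ = 0}.Countable := by
    refine (Set.countable_range fun n : ℤ => (2 * (n : ℝ) + 1) * π / 2).mono fun θ hθ => ?_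
    obtain ⟨k, hk⟩ := cos_eq_zero_iff.1 hθ
    exact ⟨k, hk.symm⟩
  exact this.ae_notMem volume

lemma circleMap_zero_one (θ : ℝ) :
    circleMap 0 1 θ = (cos θ : ℂ) + (sin θ : ℂ) * Complex.I := by
  simp [circleMap, Complex.exp_mul_I]

lemma one_sub_circleMap_sq (θ : ℝ) : 1 - circleMap 0 1 θ ^ 2 =
    2 * (sin θ : ℂ) * ((sin θ : ℂ) - (cos θ : ℂ) * Complex.I) := by
  have h : (sin θ : ℂ) ^ 2 + (cos θ : ℂ) ^ 2 = 1 := by exact_mod_cast sin_sq_add_cos_sq θ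
  rw [circleMap_zero_one]
  linear_combination (-(sin θ : ℂ) ^ 2) * Complex.I_sq - h

lemma one_add_circleMap_sq (θ : ℝ) : 1 + circleMap 0 1 θ ^ 2 =
    2 * (cos θ : ℂ) * ((cos θ : ℂ) + (sin θ : ℂ) * Complex.I) := by
  have h : (sin θ : ℂ) ^ 2 + (cos θ : ℂ) ^ 2 = 1 := by exact_mod_cast sin_sq_add_cos_sq θ
  rw [circleMap_zero_one]
  linear_combination ((sin θ : ℂ) ^ 2) * Complex.I_sq - h

lemma norm_one_sub_circleMap_sq (θ : ℝ) : ‖1 - circleMap 0 1 θ ^ 2‖ = 2 * |sin θ| := by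
  have h : ‖(sin θ : ℂ) - (cos θ : ℂ) * Complex.I‖ = 1 := by
    have h1 : ‖(sin θ : ℂ) - (cos θ : ℂ) * Complex.I‖ ^ 2 = 1 := by
      rw [← Complex.normSq_eq_norm_sq, Complex.normSq_apply]
      simp [-Complex.ofReal_sin, -Complex.ofReal_cos]
      nlinarith [sin_sq_add_cos_sq θ]
    exact (pow_eq_one_iff_of_nonneg (norm_nonneg _) two_ne_zero).1 h1
  rw [one_sub_circleMap_sq, norm_mul, h, norm_mul, Complex.norm_real, Real.norm_eq_abs]
  simp

lemma mobius_circleMap_sq {θ : ℝ} (hc : cos θ ≠ 0) :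
    (1 - circleMap 0 1 θ ^ 2) / (1 + circleMap 0 1 θ ^ 2) = -(tan θ : ℂ) * Complex.I := by
  have hne : (cos θ : ℂ) + (sin θ : ℂ) * Complex.I ≠ 0 := by
    rw [← circleMap_zero_one]; simp
  have hc' : (cos θ : ℂ) ≠ 0 := by exact_mod_cast hc
  have ht : (tan θ : ℂ) * (cos θ : ℂ) = (sin θ : ℂ) := by exact_mod_cast tan_mul_cos hc
  rw [one_sub_circleMap_sq, one_add_circleMap_sq,
    div_eq_iff (mul_ne_zero (mul_ne_zero two_ne_zero hc') hne)]
  linear_combination (2 * Complex.I * ((cos θ : ℂ) + (sin θ : ℂ) * Complex.I)) * ht +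
    2 * (sin θ : ℂ) ^ 2 * Complex.I_sq

lemma sq_mem_ball {z : ℂ} (hz : z ∈ Metric.ball (0 : ℂ) 1) : ‖z ^ 2‖ < 1 := by
  rw [mem_ball_zero_iff] at hz
  rw [norm_pow]
  exact pow_lt_one₀ (norm_nonneg _) hz two_ne_zero

/-! ### The two Schur estimates -/

/-- The first Schur estimate, from `h = 1 - z ^ 2` and the exponent `-a`. -/
lemma schur_boundary {a : ℝ} (ha0 : 0 < a) (ha1 : a < 1) {r : ℝ} (hr : r ∈ Set.Ioo (-1 : ℝ) 1) :
    ∫⁻ θ in Set.Ioc 0 (2 * π), ENNReal.ofReal (diamKernel r θ * (2 * |sin θ|) ^ (-a)) ≤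
      ENNReal.ofReal (2 * π * (cos (π * a / 2))⁻¹ * (1 - r ^ 2) ^ (-a)) := by
  have key := lintegral_diamKernel_mul_norm_rpow_le (h := fun z => 1 - z ^ 2) (c := -a)
    (by fun_prop) (fun z hz => ?_) ?_ (by rw [abs_neg, abs_of_pos ha0]; exact ha1) hr
  · simp only [norm_one_sub_circleMap_sq] at key
    have h1 : ‖(1 : ℂ) - (r : ℂ) ^ 2‖ = 1 - r ^ 2 := by
      rw [← Complex.ofReal_one, ← Complex.ofReal_pow, ← Complex.ofReal_sub, Complex.norm_real,
        Real.norm_of_nonneg]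
      nlinarith [hr.1, hr.2]
    rw [h1, mul_neg, neg_div, cos_neg] at key
    exact key
  · have h1 := (Complex.re_le_norm (z ^ 2)).trans_lt (sq_mem_ball hz)
    rw [Complex.sub_re, Complex.one_re]
    linarith
  · filter_upwards [ae_sin_ne_zero] with θ hθ
    have hre : 0 < (1 - circleMap 0 1 θ ^ 2).re := by
      rw [one_sub_circleMap_sq, ← Complex.ofReal_ofNat, ← Complex.ofReal_mul,
        Complex.re_ofReal_mul]
      simp [-Complex.ofReal_sin, -Complex.ofReal_cos]
      have := sq_pos_of_ne_zero hθ
      nlinarith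
    exact ⟨by fun_prop, Or.inl hre, hre.le⟩

/-- The boundary values of `h = (1 - z ^ 2) / (1 + z ^ 2)` are `-i tan θ`. -/
lemma lintegral_diamKernel_mul_tan_le {a : ℝ} (ha0 : 0 < a) (ha1 : a < 1) {r : ℝ}
    (hr : r ∈ Set.Ioo (-1 : ℝ) 1) :
    ∫⁻ θ in Set.Ioc 0 (2 * π), ENNReal.ofReal (diamKernel r θ * |tan θ| ^ a) ≤
      ENNReal.ofReal (2 * π * (cos (π * a / 2))⁻¹ * ((1 - r ^ 2) / (1 + r ^ 2)) ^ a) := by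
  have hden : ∀ z ∈ Metric.ball (0 : ℂ) 1, 1 + z ^ 2 ≠ 0 := fun z hz h0 => by
    have h1 := sq_mem_ball hz
    rw [show z ^ 2 = -1 by linear_combination h0] at h1
    simp at h1
  have key := lintegral_diamKernel_mul_norm_rpow_le (h := fun z => (1 - z ^ 2) / (1 + z ^ 2))
    (c := a) (fun z hz => ?_) (fun z hz => ?_) ?_ (by rw [abs_of_pos ha0]; exact ha1) hr
  · have h1 : ‖((1 : ℂ) - (r : ℂ) ^ 2) / (1 + (r : ℂ) ^ 2)‖ = (1 - r ^ 2) / (1 + r ^ 2) := by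
      rw [← Complex.ofReal_one, ← Complex.ofReal_pow, ← Complex.ofReal_sub, ← Complex.ofReal_add,
        ← Complex.ofReal_div, Complex.norm_real, Real.norm_of_nonneg]
      refine div_nonneg ?_ (by positivity)
      nlinarith [hr.1, hr.2]
    rw [h1] at key
    refine le_trans (lintegral_mono_ae (ae_restrict_of_ae ?_)) key
    filter_upwards [ae_cos_ne_zero] with θ hθ
    rw [mobius_circleMap_sq hθ, norm_mul, norm_neg, Complex.norm_real, Real.norm_eq_abs,
      Complex.norm_I, mul_one]
  · exact DifferentiableAt.differentiableWithinAt
      (DifferentiableAt.fun_div (by fun_prop) (by fun_prop) (hden z hz))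
  · have h1 := sq_mem_ball hz
    have h2 : 0 < Complex.normSq (1 + z ^ 2) := Complex.normSq_pos.2 (hden z hz)
    have h3 : (z ^ 2).re * (z ^ 2).re + (z ^ 2).im * (z ^ 2).im < 1 := by
      rw [← Complex.normSq_apply, Complex.normSq_eq_norm_sq]
      exact pow_lt_one₀ (norm_nonneg _) h1 two_ne_zero
    rw [Complex.div_re, ← add_div]
    refine div_pos ?_ h2
    simp only [Complex.sub_re, Complex.add_re, Complex.one_re, Complex.sub_im, Complex.add_im,
      Complex.one_im]
    nlinarith
  · filter_upwards [ae_cos_ne_zero, ae_sin_ne_zero] with θ hθ hs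
    have htan : tan θ ≠ 0 := by
      rw [tan_eq_sin_div_cos]; exact div_ne_zero hs hθ
    rw [mobius_circleMap_sq hθ]
    refine ⟨?_, ?_, ?_⟩
    · have : 1 + circleMap 0 1 θ ^ 2 ≠ 0 := by
        rw [one_add_circleMap_sq, ← circleMap_zero_one]
        have hc' : (cos θ : ℂ) ≠ 0 := by exact_mod_cast hθ
        simp only [ne_eq, mul_eq_zero, not_or]
        exact ⟨⟨two_ne_zero, hc'⟩, by simp⟩
      exact ContinuousAt.div (by fun_prop) (by fun_prop) this
    · right
      simpa [← Complex.ofReal_tan] using htan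
    · simp

lemma lintegral_Ioc_two_pi_of_reflect {φ : ℝ → ENNReal} (hφ : ∀ α, φ (2 * π - α) = φ α) :
    ∫⁻ α in Set.Ioc 0 (2 * π), φ α = 2 * ∫⁻ α in Set.Ioo 0 π, φ α := by
  have hsplit : Set.Ioc 0 (2 * π) = Set.Ioc 0 π ∪ Set.Ioc π (2 * π) :=
    (Set.Ioc_union_Ioc_eq_Ioc pi_pos.le (by linarith [pi_pos])).symm
  have himg : (fun α => 2 * π - α) '' Set.Ioo 0 π = Set.Ioo π (2 * π) := by
    rw [Set.image_const_sub_Ioo]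
    congr 1 <;> ring
  have h := lintegral_image_eq_lintegral_abs_deriv_mul (f := fun α => 2 * π - α)
    (f' := fun _ => -1) (s := Set.Ioo 0 π) measurableSet_Ioo
    (fun x _ => ((hasDerivAt_id x).const_sub _).hasDerivWithinAt)
    (fun x _ y _ hxy => by simpa using hxy) φ
  simp only [himg, hφ] at h
  rw [hsplit, lintegral_union measurableSet_Ioc (Set.Ioc_disjoint_Ioc_of_le le_rfl),
    ← setLIntegral_congr Ioo_ae_eq_Ioc, ← setLIntegral_congr (Ioo_ae_eq_Ioc (a := π)), h]
  simp [two_mul]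

/-- Surjectivity onto the diameter: the preimage of `r` is `arccos (2 r / (1 + r ^ 2))`. -/
lemma image_cos_div_one_add_sin :
    (fun α => cos α / (1 + sin α)) '' Set.Ioo 0 π = Set.Ioo (-1) 1 := by
  ext r
  constructor
  · rintro ⟨α, hα, rfl⟩
    have hs := sin_pos_of_mem_Ioo hα
    have h := sin_sq_add_cos_sq α
    simp only [Set.mem_Ioo]
    rw [lt_div_iff₀ (by linarith), div_lt_one (by linarith)]
    constructor <;> nlinarith
  · intro hr
    have hden : 0 < 1 + r ^ 2 := by positivity
    have hx : 2 * r / (1 + r ^ 2) ∈ Set.Ioo (-1 : ℝ) 1 := by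
      constructor
      · rw [lt_div_iff₀ hden]; nlinarith [hr.1, hr.2, sq_pos_of_pos (by linarith [hr.1] : 0 < 1 + r)]
      · rw [div_lt_one hden]; nlinarith [sq_pos_of_pos (sub_pos.2 hr.2)]
    refine ⟨arccos (2 * r / (1 + r ^ 2)), ⟨arccos_pos.2 hx.2, ?_⟩, ?_⟩
    · rw [← arccos_neg_one]
      exact strictAntiOn_arccos ⟨le_rfl, by norm_num⟩ ⟨hx.1.le, hx.2.le⟩ hx.1
    · have hsq : 1 - (2 * r / (1 + r ^ 2)) ^ 2 = ((1 - r ^ 2) / (1 + r ^ 2)) ^ 2 := by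
        field_simp; ring
      have hnn : 0 ≤ (1 - r ^ 2) / (1 + r ^ 2) := by
        refine div_nonneg ?_ hden.le
        nlinarith [hr.1, hr.2]
      simp only [cos_arccos hx.1.le hx.2.le, sin_arccos, hsq, sqrt_sq hnn]
      field_simp
      ring

lemma hasDerivAt_cos_div_one_add_sin {α : ℝ} (hα : α ∈ Set.Ioo 0 π) :
    HasDerivAt (fun α => cos α / (1 + sin α)) (-(1 + sin α)⁻¹) α := by
  have hs := sin_pos_of_mem_Ioo hα
  have hne : 1 + sin α ≠ 0 := by linarith
  refine ((hasDerivAt_cos α).fun_div ((hasDerivAt_sin α).const_add 1) hne).congr_deriv ?_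
  field_simp
  linear_combination -sin_sq_add_cos_sq α

lemma injOn_cos_div_one_add_sin :
    Set.InjOn (fun α => cos α / (1 + sin α)) (Set.Ioo 0 π) := by
  have : StrictAntiOn (fun α => cos α / (1 + sin α)) (Set.Ioo 0 π) := by
    refine strictAntiOn_of_deriv_neg (convex_Ioo _ _)
      (fun α hα => (hasDerivAt_cos_div_one_add_sin hα).continuousAt.continuousWithinAt) ?_
    intro α hα
    rw [interior_Ioo] at hα
    rw [(hasDerivAt_cos_div_one_add_sin hα).deriv]
    have hs := sin_pos_of_mem_Ioo hα
    exact neg_lt_zero.2 (by positivity)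
  exact this.injOn

/-- With `r = cos α / (1 + sin α)` the kernel is `sin α / (1 - cos α cos θ)`, whose denominator is
symmetric in `α` and `θ`. -/
lemma diamKernel_param {s c θ : ℝ} (hs : 0 < s) (hsc : s ^ 2 + c ^ 2 = 1) :
    diamKernel (c / (1 + s)) θ = s / (1 - c * cos θ) := by
  have h1 : 1 + s ≠ 0 := by positivity
  have e1 : 1 - (c / (1 + s)) ^ 2 = 2 / (1 + s) * s := by
    field_simp; linear_combination -hsc
  have e2 : 1 - 2 * (c / (1 + s)) * cos θ + (c / (1 + s)) ^ 2 = 2 / (1 + s) * (1 - c * cos θ) := by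
    field_simp; linear_combination hsc
  rw [diamKernel, e1, e2, mul_div_mul_left _ _ (by positivity)]

/-- The second Schur estimate; `a - 1 = -a (p - 1)` when `a = 1 / p`. -/
lemma schur_diameter {a : ℝ} (ha0 : 0 < a) (ha1 : a < 1) {θ : ℝ} (hθ : sin θ ≠ 0) :
    ∫⁻ r in Set.Ioo (-1) 1, ENNReal.ofReal (diamKernel r θ * (1 - r ^ 2) ^ (a - 1)) ≤
      ENNReal.ofReal (π * (cos (π * a / 2))⁻¹ * (2 * |sin θ|) ^ (a - 1)) := by
  set σ := |sin θ| with hσ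
  have hσ0 : 0 < σ := abs_pos.2 hθ
  have hσc : σ ^ 2 + cos θ ^ 2 = 1 := by rw [hσ, sq_abs]; exact sin_sq_add_cos_sq θ
  have hcos1 : |cos θ| < 1 := by
    rw [← sq_lt_one_iff_abs_lt_one]; nlinarith
  have hcpos : ∀ α, 0 < 1 - cos θ * cos α := fun α => by
    have h1 : |cos θ * cos α| < 1 := by
      rw [abs_mul]
      exact (mul_le_of_le_one_right (abs_nonneg _) (abs_cos_le_one α)).trans_lt hcos1
    linarith [(abs_lt.1 h1).2]
  have hA : 0 < cos (π * a / 2) := by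
    apply cos_pos_of_mem_Ioo
    constructor <;> nlinarith [pi_pos]
  have hρ : cos θ / (1 + σ) ∈ Set.Ioo (-1 : ℝ) 1 := by
    obtain ⟨h1, h2⟩ := abs_lt.1 hcos1
    constructor
    · rw [lt_div_iff₀ (by positivity)]; linarith
    · rw [div_lt_one (by positivity)]; linarith
  have htan := lintegral_diamKernel_mul_tan_le ha0 ha1 hρ
  have hρ2 : (1 - (cos θ / (1 + σ)) ^ 2) / (1 + (cos θ / (1 + σ)) ^ 2) = σ := by
    have h1 : 1 + σ ≠ 0 := by positivity
    have h2 : 1 + (cos θ / (1 + σ)) ^ 2 = 2 / (1 + σ) := by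
      field_simp; linear_combination hσc
    rw [h2]
    field_simp; linear_combination -hσc
  rw [hρ2, lintegral_Ioc_two_pi_of_reflect (fun α => by
    simp only [diamKernel, cos_two_pi_sub, tan_eq_sin_div_cos, sin_two_pi_sub, neg_div,
      abs_neg])] at htan
  rw [← image_cos_div_one_add_sin, lintegral_image_eq_lintegral_abs_deriv_mul measurableSet_Ioo
    (fun α hα => (hasDerivAt_cos_div_one_add_sin hα).hasDerivWithinAt) injOn_cos_div_one_add_sin]
  -- pointwise comparison in the variable `α`, from `|cos α| ≤ 1 + sin α`
  have hpt : ∀ᵐ α ∂(volume.restrict (Set.Ioo 0 π)),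
      ENNReal.ofReal |-(1 + sin α)⁻¹| * ENNReal.ofReal (diamKernel (cos α / (1 + sin α)) θ *
        (1 - (cos α / (1 + sin α)) ^ 2) ^ (a - 1)) ≤
      ENNReal.ofReal (2 ^ (a - 1) / σ) *
        ENNReal.ofReal (diamKernel (cos θ / (1 + σ)) α * |tan α| ^ a) := by
    filter_upwards [ae_restrict_mem measurableSet_Ioo, ae_restrict_of_ae ae_cos_ne_zero] with α hα hc
    have hs := sin_pos_of_mem_Ioo hα
    have hsc := sin_sq_add_cos_sq α
    rw [← ENNReal.ofReal_mul (by positivity), ← ENNReal.ofReal_mul (by positivity)]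
    apply ENNReal.ofReal_le_ofReal
    have h1 : (0 : ℝ) < 1 + sin α := by positivity
    have e1 : 1 - (cos α / (1 + sin α)) ^ 2 = 2 * (sin α / (1 + sin α)) := by
      field_simp; linear_combination -hsc
    rw [diamKernel_param hs hsc, diamKernel_param hσ0 hσc, e1, abs_neg, abs_of_pos (inv_pos.2 h1),
      mul_rpow (by norm_num) (by positivity), rpow_sub_one (x := sin α / (1 + sin α)) (by positivity),
      mul_comm (cos α)]
    have hle : (sin α / (1 + sin α)) ^ a ≤ |tan α| ^ a := by
      refine rpow_le_rpow (by positivity) ?_ ha0.le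
      rw [tan_eq_sin_div_cos, abs_div, abs_of_pos hs]
      refine div_le_div_of_nonneg_left hs.le (abs_pos.2 hc) ?_
      linarith [abs_cos_le_one α]
    have hk := hcpos α
    calc _ = 2 ^ (a - 1) / (1 - cos θ * cos α) * (sin α / (1 + sin α)) ^ a := by
          field_simp
      _ ≤ 2 ^ (a - 1) / (1 - cos θ * cos α) * |tan α| ^ a := by gcongr
      _ = _ := by field_simp
  refine (lintegral_mono_ae hpt).trans ?_
  rw [lintegral_const_mul' _ _ ENNReal.ofReal_ne_top]
  have hhalf : ∫⁻ α in Set.Ioo 0 π,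
      ENNReal.ofReal (diamKernel (cos θ / (1 + σ)) α * |tan α| ^ a) ≤
      ENNReal.ofReal (π * (cos (π * a / 2))⁻¹ * σ ^ a) := by
    have e : ENNReal.ofReal (2 * π * (cos (π * a / 2))⁻¹ * σ ^ a) =
        2 * ENNReal.ofReal (π * (cos (π * a / 2))⁻¹ * σ ^ a) := by
      rw [mul_assoc 2 π, mul_assoc 2, ENNReal.ofReal_mul (by norm_num)]
      simp
    rw [e] at htan
    exact (ENNReal.mul_le_mul_iff_right two_ne_zero ENNReal.ofNat_ne_top).1 htan
  refine (mul_le_mul_right hhalf _).trans (le_of_eq ?_)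
  rw [← ENNReal.ofReal_mul (by positivity), mul_rpow (by norm_num) hσ0.le, rpow_sub_one hσ0.ne']
  congr 1
  field_simp

/-! ### The Schur test -/

/-- Hölder's inequality with the weight `(2 |sin θ|) ^ (-1/p)`, combined with the first Schur
estimate. The integral defining `y` need not converge: its junk value `0` satisfies the bound. -/
lemma poisson_pointwise_holder {p : ℝ} (hp : 1 < p) {g : ℝ → ℝ} (hgm : Measurable g) {r : ℝ}
    (hr : r ∈ Set.Ioo (-1 : ℝ) 1) {y : ℝ}
    (hy : y = (1 / (2 * π)) * ∫ θ in (0 : ℝ)..(2 * π), diamKernel r θ * g θ) :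
    ENNReal.ofReal (|y| ^ p) ≤
      ENNReal.ofReal ((2 * π)⁻¹ * ((cos (π * p⁻¹ / 2))⁻¹) ^ (p - 1)) *
      ∫⁻ θ in Set.Ioc 0 (2 * π), ENNReal.ofReal ((1 - r ^ 2) ^ (p⁻¹ - 1) *
        (diamKernel r θ * ((2 * |sin θ|) ^ (1 - p⁻¹) * |g θ| ^ p))) := by
  have hp0 : 0 < p := by linarith
  have hppos : 0 < p⁻¹ := inv_pos.2 hp0
  have hplt : p⁻¹ < 1 := inv_lt_one_of_one_lt₀ hp
  set a := p⁻¹ with ha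
  have hap : a * p = 1 := inv_mul_cancel₀ hp0.ne'
  have hA : 0 < cos (π * a / 2) := by
    apply cos_pos_of_mem_Ioo
    constructor <;> nlinarith [pi_pos]
  have hr2 : 0 < 1 - r ^ 2 := by nlinarith [hr.1, hr.2]
  have hKm : Measurable (diamKernel r) := (continuous_diamKernel hr).measurable
  set J := ∫⁻ θ in Set.Ioc 0 (2 * π),
    ENNReal.ofReal (diamKernel r θ * ((2 * |sin θ|) ^ (1 - a) * |g θ| ^ p)) with hJ
  have h1 : ENNReal.ofReal |y| ≤ ENNReal.ofReal (2 * π)⁻¹ *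
      ∫⁻ θ in Set.Ioc 0 (2 * π), ENNReal.ofReal (diamKernel r θ * |g θ|) := by
    rw [hy, intervalIntegral.integral_of_le (by positivity), abs_mul,
      abs_of_pos (by positivity : 0 < 1 / (2 * π)), one_div, ENNReal.ofReal_mul (by positivity),
      ← Real.norm_eq_abs, ofReal_norm]
    gcongr
    refine (enorm_integral_le_lintegral_enorm _).trans (le_of_eq ?_)
    refine lintegral_congr fun θ => ?_
    rw [← ofReal_norm, Real.norm_eq_abs, abs_mul, abs_of_pos (diamKernel_pos hr θ)]
  have h2 : ∫⁻ θ in Set.Ioc 0 (2 * π), ENNReal.ofReal (diamKernel r θ * |g θ|) ≤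
      ENNReal.ofReal (2 * π * (cos (π * a / 2))⁻¹ * (1 - r ^ 2) ^ (-a)) ^ (1 - a) * J ^ a := by
    calc _ = ∫⁻ θ in Set.Ioc 0 (2 * π),
          ENNReal.ofReal (diamKernel r θ * (2 * |sin θ|) ^ (-a)) ^ (1 - a) *
          ENNReal.ofReal (diamKernel r θ * ((2 * |sin θ|) ^ (1 - a) * |g θ| ^ p)) ^ a := by
          refine lintegral_congr_ae (ae_restrict_of_ae ?_)
          filter_upwards [ae_sin_ne_zero] with θ hθ
          have hK := diamKernel_pos hr θ
          have hS : 0 < 2 * |sin θ| := by positivity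
          rw [ENNReal.ofReal_rpow_of_nonneg (by positivity) (by linarith),
            ENNReal.ofReal_rpow_of_nonneg (by positivity) hppos.le,
            ← ENNReal.ofReal_mul (by positivity)]
          congr 1
          rw [mul_rpow hK.le (by positivity), mul_rpow hK.le (by positivity),
            mul_rpow (y := |g θ| ^ p) (by positivity) (by positivity), ← rpow_mul hS.le, ← rpow_mul hS.le,
            ← rpow_mul (abs_nonneg _), mul_comm p a, hap, rpow_one]
          have e1 : diamKernel r θ ^ (1 - a) * diamKernel r θ ^ a = diamKernel r θ := by
            rw [← rpow_add hK]; simp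
          have e2 : (2 * |sin θ|) ^ (-a * (1 - a)) * (2 * |sin θ|) ^ ((1 - a) * a) = 1 := by
            rw [← rpow_add hS]
            ring_nf
            simp
          linear_combination (-|g θ|) * e1 -
            |g θ| * (diamKernel r θ ^ (1 - a) * diamKernel r θ ^ a) * e2
      _ ≤ _ := by
          refine (ENNReal.lintegral_mul_norm_pow_le (by fun_prop) (by fun_prop) (by linarith)
            hppos.le (by ring)).trans ?_
          gcongr
          exact schur_boundary hppos hplt hr
  have h3 : ENNReal.ofReal (|y| ^ p) ≤ (ENNReal.ofReal (2 * π)⁻¹ *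
      (ENNReal.ofReal (2 * π * (cos (π * a / 2))⁻¹ * (1 - r ^ 2) ^ (-a)) ^ (1 - a) * J ^ a)) ^ p := by
    rw [← ENNReal.ofReal_rpow_of_nonneg (abs_nonneg _) hp0.le]
    gcongr
    exact h1.trans (by gcongr)
  refine h3.trans (le_of_eq ?_)
  have hJ2 : ∫⁻ θ in Set.Ioc 0 (2 * π), ENNReal.ofReal ((1 - r ^ 2) ^ (a - 1) *
        (diamKernel r θ * ((2 * |sin θ|) ^ (1 - a) * |g θ| ^ p))) =
      ENNReal.ofReal ((1 - r ^ 2) ^ (a - 1)) * J := by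
    rw [hJ, ← lintegral_const_mul' _ _ ENNReal.ofReal_ne_top]
    refine lintegral_congr fun θ => ?_
    rw [ENNReal.ofReal_mul (by positivity)]
  rw [hJ2, ENNReal.mul_rpow_of_nonneg _ _ hp0.le, ENNReal.mul_rpow_of_nonneg _ _ hp0.le,
    ← ENNReal.rpow_mul, ← ENNReal.rpow_mul, hap, ENNReal.rpow_one, ← mul_assoc, ← mul_assoc,
    ENNReal.ofReal_rpow_of_nonneg (by positivity) hp0.le,
    ENNReal.ofReal_rpow_of_nonneg (by positivity) (mul_nonneg (by linarith) hp0.le),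
    ← ENNReal.ofReal_mul (by positivity), ← ENNReal.ofReal_mul (by positivity)]
  congr 2
  have e1 : (1 - a) * p = p - 1 := by linear_combination -hap
  have e2 : -a * (p - 1) = a - 1 := by linear_combination -hap
  have e3 : ((2 * π)⁻¹) ^ p * (2 * π) ^ (p - 1) = (2 * π)⁻¹ := by
    rw [inv_rpow (by positivity), ← rpow_neg (by positivity), ← rpow_add (by positivity)]
    rw [show -p + (p - 1) = -1 by ring, rpow_neg_one]
  rw [e1, mul_rpow (by positivity) (by positivity), mul_rpow (by positivity) (by positivity),
    ← rpow_mul hr2.le, e2]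
  linear_combination (((cos (π * a / 2))⁻¹) ^ (p - 1) * (1 - r ^ 2) ^ (a - 1)) * e3

/-- Sharp Riesz–Fejér inequality for harmonic Hardy spaces, stated via boundary
data and Poisson extension on the real diameter. -/
theorem riesz_fejer_harmonic_poisson (p : ℝ) (hp : 1 < p)
    (g : ℝ → ℝ) (hgm : Measurable g) (hgper : Function.Periodic g (2 * π))
    (hgint : IntegrableOn (fun θ : ℝ => |g θ| ^ p) (Set.Ioc 0 (2 * π)))
    (f : ℝ → ℝ)
    (hf : ∀ r ∈ Set.Ioo (-1 : ℝ) 1,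
      f r = (1 / (2 * π)) * ∫ θ in (0 : ℝ)..(2 * π),
        ((1 - r ^ 2) / (1 - 2 * r * Real.cos θ + r ^ 2)) * g θ) :
    (∫ r in (-1 : ℝ)..1, |f r| ^ p) ≤
      (1 / (2 * Real.cos (π / (2 * p)) ^ p)) * ∫ θ in (0 : ℝ)..(2 * π), |g θ| ^ p := by
  have hp0 : 0 < p := by linarith
  have hppos : 0 < p⁻¹ := inv_pos.2 hp0
  have hplt : p⁻¹ < 1 := inv_lt_one_of_one_lt₀ hp
  have harg : π / (2 * p) = π * p⁻¹ / 2 := by field_simp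
  rw [harg, intervalIntegral.integral_of_le (by norm_num),
    intervalIntegral.integral_of_le (by positivity), integral_Ioc_eq_integral_Ioo]
  set A := (cos (π * p⁻¹ / 2))⁻¹ with hAdef
  have hcos : 0 < cos (π * p⁻¹ / 2) := by
    apply cos_pos_of_mem_Ioo
    constructor <;> nlinarith [pi_pos]
  have hA : 0 < A := inv_pos.2 hcos
  have hconst : 1 / (2 * cos (π * p⁻¹ / 2) ^ p) = A ^ p / 2 := by
    rw [hAdef, inv_rpow hcos.le]
    field_simp
  have hGnn : 0 ≤ ∫ θ in Set.Ioc 0 (2 * π), |g θ| ^ p :=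
    integral_nonneg fun θ => by positivity
  rw [hconst]
  -- If `|f| ^ p` is not integrable, the left-hand side is the junk value `0`.
  by_cases hint : IntegrableOn (fun r => |f r| ^ p) (Set.Ioo (-1) 1)
  swap
  · rw [integral_undef hint]
    positivity
  rw [← ENNReal.ofReal_le_ofReal_iff (by positivity),
    ofReal_integral_eq_lintegral_ofReal hint
      (Filter.Eventually.of_forall fun r => by positivity),
    ENNReal.ofReal_mul (by positivity),
    ofReal_integral_eq_lintegral_ofReal hgint
      (Filter.Eventually.of_forall fun r => by positivity)]
  have hmeas : Measurable (Function.uncurry fun r θ : ℝ =>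
      ENNReal.ofReal ((1 - r ^ 2) ^ (p⁻¹ - 1) *
        (diamKernel r θ * ((2 * |sin θ|) ^ (1 - p⁻¹) * |g θ| ^ p)))) := by
    have := measurable_diamKernel
    unfold Function.uncurry
    fun_prop
  calc ∫⁻ r in Set.Ioo (-1) 1, ENNReal.ofReal (|f r| ^ p)
      ≤ ∫⁻ r in Set.Ioo (-1) 1, ENNReal.ofReal ((2 * π)⁻¹ * A ^ (p - 1)) *
        ∫⁻ θ in Set.Ioc 0 (2 * π), ENNReal.ofReal ((1 - r ^ 2) ^ (p⁻¹ - 1) *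
          (diamKernel r θ * ((2 * |sin θ|) ^ (1 - p⁻¹) * |g θ| ^ p))) :=
        setLIntegral_mono' measurableSet_Ioo fun r hr =>
          poisson_pointwise_holder hp hgm hr (hf r hr)
    _ = ENNReal.ofReal ((2 * π)⁻¹ * A ^ (p - 1)) * ∫⁻ θ in Set.Ioc 0 (2 * π),
        ∫⁻ r in Set.Ioo (-1) 1, ENNReal.ofReal ((1 - r ^ 2) ^ (p⁻¹ - 1) *
          (diamKernel r θ * ((2 * |sin θ|) ^ (1 - p⁻¹) * |g θ| ^ p))) := by
        rw [lintegral_const_mul' _ _ ENNReal.ofReal_ne_top,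
          lintegral_lintegral_swap hmeas.aemeasurable]
    _ ≤ ENNReal.ofReal ((2 * π)⁻¹ * A ^ (p - 1)) * ∫⁻ θ in Set.Ioc 0 (2 * π),
        ENNReal.ofReal (π * A) * ENNReal.ofReal (|g θ| ^ p) := by
        gcongr ENNReal.ofReal ((2 * π)⁻¹ * A ^ (p - 1)) * ?_
        refine lintegral_mono_ae (ae_restrict_of_ae ?_)
        filter_upwards [ae_sin_ne_zero] with θ hθ
        have hS : 0 < 2 * |sin θ| := by positivity
        calc _ = ∫⁻ r in Set.Ioo (-1) 1, ENNReal.ofReal ((2 * |sin θ|) ^ (1 - p⁻¹) * |g θ| ^ p) *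
              ENNReal.ofReal (diamKernel r θ * (1 - r ^ 2) ^ (p⁻¹ - 1)) := by
              refine lintegral_congr fun r => ?_
              rw [← ENNReal.ofReal_mul (by positivity)]
              congr 1
              ring
          _ = ENNReal.ofReal ((2 * |sin θ|) ^ (1 - p⁻¹) * |g θ| ^ p) * ∫⁻ r in Set.Ioo (-1) 1,
              ENNReal.ofReal (diamKernel r θ * (1 - r ^ 2) ^ (p⁻¹ - 1)) :=
              lintegral_const_mul' _ _ ENNReal.ofReal_ne_top
          _ ≤ ENNReal.ofReal ((2 * |sin θ|) ^ (1 - p⁻¹) * |g θ| ^ p) *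
              ENNReal.ofReal (π * A * (2 * |sin θ|) ^ (p⁻¹ - 1)) := by
              gcongr
              exact schur_diameter hppos hplt hθ
          _ = _ := by
              rw [← ENNReal.ofReal_mul (by positivity), ← ENNReal.ofReal_mul (by positivity)]
              congr 1
              have e : (2 * |sin θ|) ^ (1 - p⁻¹) * (2 * |sin θ|) ^ (p⁻¹ - 1) = 1 := by
                rw [← rpow_add hS]
                simp
              linear_combination (|g θ| ^ p * π * A) * e
    _ = _ := by
        rw [lintegral_const_mul' _ _ ENNReal.ofReal_ne_top, ← mul_assoc,
          ← ENNReal.ofReal_mul (by positivity)]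
        congr 2
        rw [rpow_sub_one hA.ne']
        field_simp
end

section
/- Let $1<p<\infty$. For every $\theta$ with $0<\theta<\pi$, $\int_{-1}^{1}\frac{(1-r^2)^{1/p}}{1-2r\cos\theta+r^2}\,dr\le \frac{\pi}{\cos^{p}\frac{\pi}{2p}}\,2^{-\frac{p-1}{p}}\,(\sin\theta)^{-\frac{p-1}{p}}\,\cos^{p-1}\Big(\frac{\pi}{2p}-\frac{\theta}{p}\Big)$. -/
open Real MeasureTheory

/-!
Put `a = 1/p`. Since `|π/(2p) - θ/p| ≤ π/(2p)`, the factor `cos (π/(2p) - θ/p)` on the right is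
at least `cos (π/(2p))`, so it suffices to prove
`∫ (1 - r²)^a / (1 - 2 r cos θ + r²) dr ≤ (2 sin θ) ^ (a - 1) * π / cos (π a / 2)`.

With `h = θ/2`, the substitution `r = sin (u - h) / sin (u + h)` turns the left-hand side into
`(sin θ) ^ (a - 1) * ∫ sin(2u)^a sin(u + h)^(-2a) du` over `(0, π/2)` (`integral_substitution`).
Averaging the integrand with its reflection under `u ↦ π/2 - u` replaces `sin(u + h)^(-2a)` by
the mean of `X^(-a)` and `Y^(-a)`, where `X = sin²(u + h)` and `Y = cos²(u - h)`. Both `X` and `Y`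
are at least `min (sin² u) (cos² u)`, and `X Y ≥ sin² u cos² u`, because
`sin(u + h) cos(u - h) = sin u cos u + sin h cos h`. Hence
`X^(-a) + Y^(-a) ≤ (sin² u)^(-a) + (cos² u)^(-a)` (`rpow_neg_add_le`), and the symmetrized
integrand is at most `2^a (tan^a u + cot^a u)` pointwise. The integrals of `tan^a` and `cot^a` are
Beta integrals, both equal to `π / (2 cos (π a / 2))` by Euler's reflection formula
(`integral_tan_rpow`).
-/

/-- Euler's reflection formula as a real Beta integral, together with its convergence. -/
lemma beta_reflection (b : ℝ) (hb0 : 0 < b) (hb1 : b < 1) :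
    IntervalIntegrable (fun x : ℝ => x ^ (b - 1) * (1 - x) ^ (-b)) volume 0 1 ∧
      ∫ x in (0 : ℝ)..1, x ^ (b - 1) * (1 - x) ^ (-b) = π / sin (π * b) := by
  have hconv := Complex.betaIntegral_convergent (u := (b : ℂ)) (v := ((1 - b : ℝ) : ℂ))
    (by simpa using hb0) (by simpa using hb1)
  have hpt : ∀ x ∈ Set.uIcc (0 : ℝ) 1,
      (x : ℂ) ^ ((b : ℂ) - 1) * (1 - (x : ℂ)) ^ (((1 - b : ℝ) : ℂ) - 1)
        = ((x ^ (b - 1) * (1 - x) ^ (-b) : ℝ) : ℂ) := by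
    intro x hx
    rw [Set.uIcc_of_le zero_le_one] at hx
    rw [Complex.ofReal_mul, Complex.ofReal_cpow hx.1, Complex.ofReal_cpow (by linarith [hx.2])]
    push_cast
    ring_nf
  have hint : IntervalIntegrable (fun x : ℝ => x ^ (b - 1) * (1 - x) ^ (-b)) volume 0 1 := by
    have h2 := hconv.congr (fun x hx => hpt x (Set.uIoc_subset_uIcc hx))
    rw [intervalIntegrable_iff] at h2 ⊢
    exact h2.re
  refine ⟨hint, ?_⟩
  have hβ := Complex.betaIntegral_eq_Gamma_mul_div (b : ℂ) ((1 - b : ℝ) : ℂ)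
    (by simpa using hb0) (by simpa using hb1)
  rw [Complex.betaIntegral, intervalIntegral.integral_congr hpt,
    intervalIntegral.integral_ofReal] at hβ
  have h1 : (b : ℂ) + ((1 - b : ℝ) : ℂ) = 1 := by push_cast; ring
  rw [h1, Complex.Gamma_one, div_one, Complex.Gamma_ofReal, Complex.Gamma_ofReal] at hβ
  rw [← Real.Gamma_mul_Gamma_one_sub]
  exact_mod_cast hβ

/-- Substituting `x = sin² u` in the Beta integral gives `∫ tan^a = π / (2 cos (π a / 2))`
over the first quadrant, for `-1 < a < 1`. -/
lemma integral_tan_rpow (a : ℝ) (ha0 : -1 < a) (ha1 : a < 1) :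
    IntervalIntegrable (fun u : ℝ => sin u ^ a * cos u ^ (-a)) volume 0 (π / 2) ∧
      ∫ u in (0 : ℝ)..(π / 2), sin u ^ a * cos u ^ (-a) = π / (2 * cos (π * a / 2)) := by
  have hpi : (0 : ℝ) ≤ π / 2 := by positivity
  obtain ⟨hint, hval⟩ := beta_reflection ((1 + a) / 2) (by linarith) (by linarith)
  set g : ℝ → ℝ := fun x => x ^ ((1 + a) / 2 - 1) * (1 - x) ^ (-((1 + a) / 2)) with hg
  have hder : ∀ x ∈ Set.Ioo (min 0 (π / 2)) (max 0 (π / 2)),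
      HasDerivAt (fun u : ℝ => sin u ^ 2) (2 * sin x * cos x) x := by
    intro x _
    simpa using! (hasDerivAt_sin x).pow 2
  have hnn : ∀ x ∈ Set.Ioo (min 0 (π / 2)) (max 0 (π / 2)), 0 ≤ 2 * sin x * cos x := by
    intro x hx
    rw [min_eq_left hpi, max_eq_right hpi] at hx
    have := sin_pos_of_pos_of_lt_pi hx.1 (by linarith [hx.2, pi_pos])
    have := cos_pos_of_mem_Ioo ⟨by linarith [hx.1], hx.2⟩
    positivity
  have hcont : ContinuousOn (fun u : ℝ => sin u ^ 2) (Set.uIcc 0 (π / 2)) := by fun_prop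
  have hI := intervalIntegral.integral_comp_mul_deriv_of_deriv_nonneg (g := g) hcont hder hnn
  have hII := intervalIntegral.integrable_comp_mul_deriv_iff_of_deriv_nonneg (g := g)
    hcont hder hnn
  simp only [sin_zero, sin_pi_div_two, one_pow, ne_eq, OfNat.ofNat_ne_zero, not_false_eq_true,
    zero_pow] at hI hII
  have hpt : ∀ u ∈ Set.Ioo (0 : ℝ) (π / 2),
      (g ∘ fun u : ℝ => sin u ^ 2) u * (2 * sin u * cos u) = 2 * (sin u ^ a * cos u ^ (-a)) := by
    intro u hu
    have hs := sin_pos_of_pos_of_lt_pi hu.1 (by linarith [hu.2, pi_pos])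
    have hc := cos_pos_of_mem_Ioo ⟨by linarith [hu.1, pi_pos], hu.2⟩
    have h1 : 1 - sin u ^ 2 = cos u ^ 2 := by linarith [sin_sq_add_cos_sq u]
    simp only [hg, Function.comp, h1]
    rw [← rpow_natCast (sin u), ← rpow_natCast (cos u), ← rpow_mul hs.le, ← rpow_mul hc.le]
    have e1 : sin u ^ a = sin u ^ (((2 : ℕ) : ℝ) * ((1 + a) / 2 - 1)) * sin u := by
      rw [← rpow_add_one hs.ne']; congr 1; push_cast; ring
    have e2 : cos u ^ (-a) = cos u ^ (((2 : ℕ) : ℝ) * (-((1 + a) / 2))) * cos u := by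
      rw [← rpow_add_one hc.ne']; congr 1; push_cast; ring
    rw [e1, e2]; ring
  have hint2 : IntervalIntegrable (fun u : ℝ => 2 * (sin u ^ a * cos u ^ (-a)))
      volume 0 (π / 2) := by
    have h := hII.2 hint
    rw [intervalIntegrable_iff_integrableOn_Ioo_of_le hpi] at h ⊢
    exact h.congr_fun hpt measurableSet_Ioo
  have hsin : sin (π * ((1 + a) / 2)) = cos (π * a / 2) := by
    rw [← sin_pi_div_two_sub, ← sin_pi_sub]; congr 1; ring
  refine ⟨by simpa using hint2.const_mul (1 / 2), ?_⟩
  have h3 : ∫ u in (0 : ℝ)..(π / 2), 2 * (sin u ^ a * cos u ^ (-a)) = π / cos (π * a / 2) := by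
    rw [← hsin, ← hval, ← hI, intervalIntegral.integral_of_le hpi,
      intervalIntegral.integral_of_le hpi, integral_Ioc_eq_integral_Ioo,
      integral_Ioc_eq_integral_Ioo]
    exact setIntegral_congr_fun measurableSet_Ioo (fun u hu => (hpt u hu).symm)
  rw [intervalIntegral.integral_const_mul] at h3
  rw [mul_comm 2, ← div_div, ← h3]; ring

/-- A bound on the larger number and on the product bounds the sum. -/
lemma add_le_add_of_le_of_mul_le {x y A B : ℝ} (hA : 0 < A) (hx : x ≤ A) (hy : y ≤ A)
    (hxy : x * y ≤ A * B) : x + y ≤ A + B := by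
  have h := mul_nonneg (sub_nonneg.2 hx) (sub_nonneg.2 hy)
  have : A * (x + y) ≤ A * (A + B) := by nlinarith
  exact le_of_mul_le_mul_left this hA

/-- The inequality for negative powers behind the symmetrized comparison: the smaller of `X, Y`
dominates the smaller of `S, C`, and `X Y` dominates `S C`. -/
lemma rpow_neg_add_le {a X Y S C : ℝ} (ha : 0 < a) (hS : 0 < S) (hC : 0 < C)
    (hX : min S C ≤ X) (hY : min S C ≤ Y) (hXY : S * C ≤ X * Y) :
    X ^ (-a) + Y ^ (-a) ≤ S ^ (-a) + C ^ (-a) := by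
  have hm : 0 < min S C := lt_min hS hC
  have hX0 := hm.trans_le hX
  have hY0 := hm.trans_le hY
  have hprod : X ^ (-a) * Y ^ (-a) ≤ S ^ (-a) * C ^ (-a) := by
    rw [← mul_rpow hX0.le hY0.le, ← mul_rpow hS.le hC.le]
    exact rpow_le_rpow_of_nonpos (by positivity) hXY (by linarith)
  have hx := rpow_le_rpow_of_nonpos hm hX (by linarith : -a ≤ 0)
  have hy := rpow_le_rpow_of_nonpos hm hY (by linarith : -a ≤ 0)
  rcases le_total S C with h | h
  · rw [min_eq_left h] at hx hy
    exact add_le_add_of_le_of_mul_le (by positivity) hx hy hprod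
  · rw [min_eq_right h] at hx hy
    rw [add_comm (S ^ (-a))]
    exact add_le_add_of_le_of_mul_le (by positivity) hx hy (by rwa [mul_comm (C ^ (-a))])

/-- The integrand on `(0, π/2)` plus its reflection under `u ↦ π/2 - u` is at most
`2^a (tan^a u + cot^a u)`, its value at `h = 0`. -/
lemma symmetrized_pointwise {a h u : ℝ} (ha : 0 < a) (hh : h ∈ Set.Ioo (0 : ℝ) (π / 2))
    (hu : u ∈ Set.Ioo (0 : ℝ) (π / 2)) :
    sin (2 * u) ^ a * (sin (u + h) ^ 2) ^ (-a) + sin (2 * u) ^ a * (cos (u - h) ^ 2) ^ (-a) ≤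
      (2 : ℝ) ^ a * (sin u ^ a * cos u ^ (-a) + sin u ^ (-a) * cos u ^ a) := by
  have hs := sin_pos_of_pos_of_lt_pi hu.1 (by linarith [hu.2, pi_pos])
  have hc := cos_pos_of_mem_Ioo ⟨by linarith [hu.1, pi_pos], hu.2⟩
  have hs' := sin_pos_of_pos_of_lt_pi hh.1 (by linarith [hh.2, pi_pos])
  have hc' := cos_pos_of_mem_Ioo ⟨by linarith [hh.1, pi_pos], hh.2⟩
  have hss := sin_sq_add_cos_sq u
  have hhh := sin_sq_add_cos_sq h
  have key : (sin (u + h) ^ 2) ^ (-a) + (cos (u - h) ^ 2) ^ (-a) ≤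
      (sin u ^ 2) ^ (-a) + (cos u ^ 2) ^ (-a) := by
    have hpp := mul_pos hs' hc'
    have hqq := mul_pos hs hc
    have hqp := mul_pos hpp hqq
    apply rpow_neg_add_le ha (by positivity) (by positivity)
    · rw [sin_add]
      rcases le_total (sin u) (cos u) with hle | hle
      · refine (min_le_left _ _).trans ?_
        nlinarith [mul_self_le_mul_self hs.le hle]
      · refine (min_le_right _ _).trans ?_
        nlinarith [mul_self_le_mul_self hc.le hle]
    · rw [cos_sub]
      rcases le_total (sin u) (cos u) with hle | hle
      · refine (min_le_left _ _).trans ?_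
        nlinarith [mul_self_le_mul_self hs.le hle]
      · refine (min_le_right _ _).trans ?_
        nlinarith [mul_self_le_mul_self hc.le hle]
    · have e : sin (u + h) * cos (u - h) = sin u * cos u + sin h * cos h := by
        rw [sin_add, cos_sub]
        linear_combination (sin u * cos u) * hhh + (sin h * cos h) * hss
      rw [← mul_pow, ← mul_pow, e]
      gcongr
      linarith
  rw [← mul_add]
  calc _ ≤ sin (2 * u) ^ a * ((sin u ^ 2) ^ (-a) + (cos u ^ 2) ^ (-a)) := by
        gcongr
        rw [sin_two_mul]; positivity
    _ = _ := by
        rw [sin_two_mul, mul_rpow (by positivity) hc.le, mul_rpow (by positivity) hs.le,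
          sq (sin u), sq (cos u), mul_rpow hs.le hs.le, mul_rpow hc.le hc.le]
        have e1 : sin u ^ a * sin u ^ (-a) = 1 := by rw [← rpow_add hs]; simp
        have e2 : cos u ^ a * cos u ^ (-a) = 1 := by rw [← rpow_add hc]; simp
        linear_combination (2 ^ a * cos u ^ a * sin u ^ (-a)) * e1 +
          (2 ^ a * sin u ^ a * cos u ^ (-a)) * e2

/-- The substitution `r = sin (u - h) / sin (u + h)`, with `h = θ / 2`, carries `(0, π/2)` onto
`(-1, 1)`, and its Jacobian is `(1 - 2 r cos θ + r²) / sin θ`, which cancels the denominator. -/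
lemma integral_substitution {a θ : ℝ} (ha : 0 < a) (hθ : θ ∈ Set.Ioo (0 : ℝ) π) :
    (∫ r in (-1 : ℝ)..1, (1 - r ^ 2) ^ a / (1 - 2 * r * cos θ + r ^ 2)) =
      sin θ ^ (a - 1) *
        ∫ u in (0 : ℝ)..(π / 2), sin (2 * u) ^ a * (sin (u + θ / 2) ^ 2) ^ (-a) := by
  have hpi : (0 : ℝ) ≤ π / 2 := by positivity
  have hsθ := sin_pos_of_pos_of_lt_pi hθ.1 hθ.2
  have hpos : ∀ u ∈ Set.uIcc (0 : ℝ) (π / 2), 0 < sin (u + θ / 2) := by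
    intro u hu
    rw [Set.uIcc_of_le hpi] at hu
    exact sin_pos_of_pos_of_lt_pi (by linarith [hu.1, hθ.1]) (by linarith [hu.2, hθ.2])
  have hder : ∀ u ∈ Set.uIcc (0 : ℝ) (π / 2),
      HasDerivAt (fun u => sin (u - θ / 2) / sin (u + θ / 2))
        (sin θ / sin (u + θ / 2) ^ 2) u := by
    intro u hu
    have h1 : HasDerivAt (fun u => sin (u - θ / 2)) (cos (u - θ / 2)) u := by
      simpa using (hasDerivAt_id u).sub_const (θ / 2) |>.sin
    have h2 : HasDerivAt (fun u => sin (u + θ / 2)) (cos (u + θ / 2)) u := by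
      simpa using (hasDerivAt_id u).add_const (θ / 2) |>.sin
    have hst : sin θ =
        cos (u - θ / 2) * sin (u + θ / 2) - sin (u - θ / 2) * cos (u + θ / 2) := by
      rw [mul_comm (cos _), mul_comm (sin (u - _)), ← sin_sub]
      congr 1
      ring
    rw [hst]
    exact h1.div h2 (hpos u hu).ne'
  have hcd : ContinuousOn (fun u => sin θ / sin (u + θ / 2) ^ 2) (Set.uIcc (0 : ℝ) (π / 2)) :=
    ContinuousOn.div (by fun_prop) (by fun_prop) (fun u hu => (pow_pos (hpos u hu) 2).ne')
  have hden : ∀ r : ℝ, 0 < 1 - 2 * r * cos θ + r ^ 2 := by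
    intro r
    nlinarith [sq_nonneg (r - cos θ), sin_sq_add_cos_sq θ, pow_pos hsθ 2]
  have hg : Continuous (fun r : ℝ => (1 - r ^ 2) ^ a / (1 - 2 * r * cos θ + r ^ 2)) := by
    refine Continuous.div ?_ (by fun_prop) (fun r => (hden r).ne')
    exact Continuous.rpow_const (by fun_prop) (fun _ => Or.inr ha.le)
  have hI := intervalIntegral.integral_comp_mul_deriv hder hcd hg
  have hc2 : 0 < cos (θ / 2) :=
    cos_pos_of_mem_Ioo ⟨by linarith [hθ.1, pi_pos], by linarith [hθ.2]⟩
  have hs2 : 0 < sin (θ / 2) :=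
    sin_pos_of_pos_of_lt_pi (by linarith [hθ.1]) (by linarith [hθ.2, pi_pos])
  have e0 : sin (0 - θ / 2) / sin (0 + θ / 2) = -1 := by
    rw [zero_sub, zero_add, sin_neg, neg_div, div_self hs2.ne']
  have e1 : sin (π / 2 - θ / 2) / sin (π / 2 + θ / 2) = 1 := by
    rw [sin_pi_div_two_sub, add_comm, sin_add_pi_div_two, div_self hc2.ne']
  simp only [e0, e1] at hI
  rw [← hI, ← intervalIntegral.integral_const_mul]
  refine intervalIntegral.integral_congr (fun u hu => ?_)
  have hA := hpos u hu
  have hu' := hu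
  rw [Set.uIcc_of_le hpi] at hu'
  have hs2u : 0 ≤ sin (2 * u) :=
    sin_nonneg_of_nonneg_of_le_pi (by linarith [hu'.1]) (by linarith [hu'.2])
  have hθe : θ = (u + θ / 2) - (u - θ / 2) := by ring
  have h2ue : 2 * u = (u + θ / 2) + (u - θ / 2) := by ring
  have hst : sin θ = sin (u + θ / 2) * cos (u - θ / 2) - cos (u + θ / 2) * sin (u - θ / 2) := by
    conv_lhs => rw [hθe, sin_sub]
  have hct : cos θ = cos (u + θ / 2) * cos (u - θ / 2) + sin (u + θ / 2) * sin (u - θ / 2) := by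
    conv_lhs => rw [hθe, cos_sub]
  have hsu : sin (2 * u) =
      sin (u + θ / 2) * cos (u - θ / 2) + cos (u + θ / 2) * sin (u - θ / 2) := by
    rw [h2ue, sin_add]
  have hqA := sin_sq_add_cos_sq (u + θ / 2)
  have hqB := sin_sq_add_cos_sq (u - θ / 2)
  have n1 : 1 - (sin (u - θ / 2) / sin (u + θ / 2)) ^ 2 =
      sin (2 * u) * sin θ * (sin (u + θ / 2) ^ 2)⁻¹ := by
    rw [hsu, hst]
    generalize sin (u + θ / 2) = A, cos (u + θ / 2) = A', sin (u - θ / 2) = B,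
      cos (u - θ / 2) = B' at hA hqA hqB ⊢
    field_simp
    linear_combination (-A ^ 2) * hqB + (B ^ 2) * hqA
  -- the law of cosines in a triangle of circumdiameter one
  have n2 : 1 - 2 * (sin (u - θ / 2) / sin (u + θ / 2)) * cos θ +
      (sin (u - θ / 2) / sin (u + θ / 2)) ^ 2 = sin θ ^ 2 / sin (u + θ / 2) ^ 2 := by
    rw [hct, hst]
    generalize sin (u + θ / 2) = A, cos (u + θ / 2) = A', sin (u - θ / 2) = B,
      cos (u - θ / 2) = B' at hA hqA hqB ⊢
    field_simp
    linear_combination (-A ^ 2) * hqB - (B ^ 2) * hqA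
  simp only [Function.comp]
  rw [n1, n2, mul_rpow (by positivity) (by positivity), mul_rpow hs2u hsθ.le,
    inv_rpow (by positivity), ← rpow_neg (by positivity), rpow_sub_one hsθ.ne']
  generalize sin (u + θ / 2) = A at *
  field_simp

/-- The integral is its own reflection under `u ↦ π/2 - u`, so it is half the integral of the
symmetrized integrand, which `symmetrized_pointwise` and `integral_tan_rpow` bound. -/
lemma integral_substituted_le {a h : ℝ} (ha0 : 0 < a) (ha1 : a < 1)
    (hh : h ∈ Set.Ioo (0 : ℝ) (π / 2)) :
    ∫ u in (0 : ℝ)..(π / 2), sin (2 * u) ^ a * (sin (u + h) ^ 2) ^ (-a) ≤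
      (2 : ℝ) ^ (a - 1) * (π / cos (π * a / 2)) := by
  have hpi : (0 : ℝ) ≤ π / 2 := by positivity
  set F : ℝ → ℝ := fun u => sin (2 * u) ^ a * (sin (u + h) ^ 2) ^ (-a) with hF
  have hFc : ContinuousOn F (Set.uIcc 0 (π / 2)) := by
    refine ContinuousOn.mul ?_ ?_
    · exact ContinuousOn.rpow_const (by fun_prop) (fun _ _ => Or.inr ha0.le)
    · refine ContinuousOn.rpow_const (by fun_prop) (fun u hu => Or.inl ?_)
      rw [Set.uIcc_of_le hpi] at hu
      have := sin_pos_of_pos_of_lt_pi (x := u + h) (by linarith [hu.1, hh.1])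
        (by linarith [hu.2, hh.2])
      positivity
  have hFi : IntervalIntegrable F volume 0 (π / 2) := hFc.intervalIntegrable
  have hrefl : ∫ u in (0 : ℝ)..(π / 2), F (π / 2 - u) = ∫ u in (0 : ℝ)..(π / 2), F u := by
    simp [intervalIntegral.integral_comp_sub_left F (π / 2)]
  have hFi' : IntervalIntegrable (fun u => F (π / 2 - u)) volume 0 (π / 2) := by
    simpa using (hFi.comp_sub_left (π / 2)).symm
  obtain ⟨i1, v1⟩ := integral_tan_rpow a (by linarith) ha1
  obtain ⟨i2, v2⟩ := integral_tan_rpow (-a) (by linarith) (by linarith)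
  simp only [neg_neg] at i2 v2
  have hmono := intervalIntegral.integral_mono_on_of_le_Ioo hpi (hFi.add hFi')
    ((i1.add i2).const_mul ((2 : ℝ) ^ a)) (fun u hu => by
      have h2 : sin (2 * (π / 2 - u)) = sin (2 * u) := by
        rw [← sin_pi_sub]; congr 1; ring
      have h3 : sin (π / 2 - u + h) = cos (u - h) := by
        rw [← sin_pi_div_two_sub]; congr 1; ring
      simpa only [hF, h2, h3] using symmetrized_pointwise ha0 hh hu)
  rw [intervalIntegral.integral_const_mul, intervalIntegral.integral_add i1 i2,
    intervalIntegral.integral_add hFi hFi', hrefl, v1, v2] at hmono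
  rw [mul_neg, neg_div, cos_neg] at hmono
  have hc : π / (2 * cos (π * a / 2)) = π / cos (π * a / 2) / 2 := by
    rw [mul_comm, div_div]
  rw [hc] at hmono
  rw [rpow_sub_one two_ne_zero]
  linarith

/-- Pointwise Schur-test inequality for the Poisson kernel with the test
function `h(e^{iθ}) = Re (1 - e^{2iθ})^(-1/p)`. -/
theorem schur_pointwise_inequality (p : ℝ) (hp : 1 < p)
    (θ : ℝ) (hθ : θ ∈ Set.Ioo (0 : ℝ) π) :
    (∫ r in (-1 : ℝ)..1, (1 - r ^ 2) ^ (1 / p) / (1 - 2 * r * Real.cos θ + r ^ 2)) ≤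
      π / Real.cos (π / (2 * p)) ^ p * (2 : ℝ) ^ (-((p - 1) / p)) *
        Real.sin θ ^ (-((p - 1) / p)) * Real.cos (π / (2 * p) - θ / p) ^ (p - 1) := by
  have hp0 : 0 < p := by linarith
  have hsθ := sin_pos_of_pos_of_lt_pi hθ.1 hθ.2
  have hex : -((p - 1) / p) = 1 / p - 1 := by field_simp; ring
  have hang : π * (1 / p) / 2 = π / (2 * p) := by field_simp
  have hlt : π / (2 * p) < π / 2 := by
    apply div_lt_div_of_pos_left pi_pos two_pos; linarith
  have hpp : 0 < π / (2 * p) := by positivity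
  have hc : 0 < cos (π / (2 * p)) := cos_pos_of_mem_Ioo ⟨by linarith, hlt⟩
  have hle : cos (π / (2 * p)) ≤ cos (π / (2 * p) - θ / p) := by
    rw [← cos_abs (π / (2 * p) - θ / p)]
    have h1 : 0 < θ / p := div_pos hθ.1 hp0
    have h2 : θ / p ≤ 2 * (π / (2 * p)) := by
      have : 2 * (π / (2 * p)) = π / p := by field_simp
      rw [this]
      exact div_le_div_of_nonneg_right hθ.2.le hp0.le
    refine cos_le_cos_of_nonneg_of_le_pi (abs_nonneg _) (by linarith) ?_
    rw [abs_le]; constructor <;> linarith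
  have hbound := integral_substituted_le (a := 1 / p) (h := θ / 2) (by positivity)
    ((div_lt_one hp0).2 hp) ⟨by linarith [hθ.1], by linarith [hθ.2]⟩
  rw [integral_substitution (by positivity : 0 < 1 / p) hθ, hex]
  rw [hang] at hbound
  calc _ ≤ sin θ ^ (1 / p - 1) * ((2 : ℝ) ^ (1 / p - 1) * (π / cos (π / (2 * p)))) := by
        gcongr
    _ = π / cos (π / (2 * p)) ^ p * (2 : ℝ) ^ (1 / p - 1) * sin θ ^ (1 / p - 1) *
          cos (π / (2 * p)) ^ (p - 1) := by
        rw [rpow_sub_one hc.ne']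
        have : 0 < cos (π / (2 * p)) ^ p := by positivity
        generalize cos (π / (2 * p)) = c at *
        field_simp
    _ ≤ _ := by
        gcongr
end

section
/- Let $1<p<\infty$ and $0<\theta<\pi$. Then $(\sin\theta)^{\frac{p-1}{p}}\int_{-1}^{1}\frac{(1-r^2)^{1/p}}{1-2r\cos\theta+r^2}\,dr = 2^{1/p}\int_0^{+\infty}\frac{y^{1/p}}{(y^2+1)\big(y\cos\frac{\theta}{2}+\sin\frac{\theta}{2}\big)^{2/p}}\,dy$. -/
/-!
With `c = cos (θ/2)`, `s = sin (θ/2)` and `D y = y * c + s`, the substitution is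
`r = (y * c - s) / (y * c + s)`, a bijection from `(0, ∞)` onto `(-1, 1)`. Since
`sin θ = 2 * s * c` and `cos θ = c ^ 2 - s ^ 2`,
* `dr = sin θ / D ^ 2 dy`,
* `1 - r ^ 2 = 2 * y * sin θ / D ^ 2`,
* `1 - 2 * r * cos θ + r ^ 2 = sin θ ^ 2 * (y ^ 2 + 1) / D ^ 2`,
so the transformed integrand is `sin θ ^ (1 / p - 1)` times the integrand on the right-hand
side. The change of variables formula for injective maps needs no integrability hypothesis.
-/

open Real MeasureTheory

lemma schurSubst_image {c s : ℝ} (hc : 0 < c) (hs : 0 < s) :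
    (fun y : ℝ => (y * c - s) / (y * c + s)) '' Set.Ioi 0 = Set.Ioo (-1) 1 := by
  ext r
  constructor
  · rintro ⟨y, hy, rfl⟩
    have hyc : 0 < y * c := mul_pos hy hc
    have hD : 0 < y * c + s := by positivity
    constructor
    · rw [lt_div_iff₀ hD]; linarith
    · rw [div_lt_iff₀ hD]; linarith
  · rintro ⟨h1, h2⟩
    have h1' : 0 < 1 + r := by linarith
    have h2' : 0 < 1 - r := by linarith
    -- Solve `(1 + r) / (1 - r) = y * c / s` for `y`.
    refine ⟨(1 + r) * s / ((1 - r) * c), by simp only [Set.mem_Ioi]; positivity, ?_⟩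
    have e : (1 + r) * s / ((1 - r) * c) * c = (1 + r) * s / (1 - r) := by
      field_simp
    simp only [e]
    have hD : 0 < (1 + r) * s / (1 - r) + s := by positivity
    rw [div_eq_iff hD.ne']
    field_simp
    ring

lemma schurSubst_injOn {c s : ℝ} (hc : 0 < c) (hs : 0 < s) :
    Set.InjOn (fun y : ℝ => (y * c - s) / (y * c + s)) (Set.Ioi 0) := by
  intro x hx y hy h
  have hxc : 0 < x * c := mul_pos hx hc
  have hyc : 0 < y * c := mul_pos hy hc
  have hDx : x * c + s ≠ 0 := by positivity
  have hDy : y * c + s ≠ 0 := by positivity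
  simp only [div_eq_div_iff hDx hDy] at h
  have h3 : (c * s) * (x - y) = 0 := by linarith
  have := (mul_eq_zero.1 h3).resolve_left (by positivity)
  linarith

lemma schurSubst_hasDerivAt {c s y : ℝ} (hc : 0 < c) (hs : 0 < s) (hy : 0 < y) :
    HasDerivAt (fun y : ℝ => (y * c - s) / (y * c + s)) (2 * s * c / (y * c + s) ^ 2) y := by
  have hD : y * c + s ≠ 0 := by positivity
  have h := (((hasDerivAt_id y).mul_const c).sub_const s).div
    (((hasDerivAt_id y).mul_const c).add_const s) hD
  refine h.congr_deriv ?_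
  simp only [id]
  congr 1
  ring

/-- The integrand after the substitution, with `a = 1 / p` and `2 * s * c = sin θ`. -/
lemma schurSubst_integrand {c s y a : ℝ} (hc : 0 < c) (hs : 0 < s) (hy : 0 < y)
    (h1 : s ^ 2 + c ^ 2 = 1) :
    |2 * s * c / (y * c + s) ^ 2| *
      ((1 - ((y * c - s) / (y * c + s)) ^ 2) ^ a /
        (1 - 2 * ((y * c - s) / (y * c + s)) * (c ^ 2 - s ^ 2)
          + ((y * c - s) / (y * c + s)) ^ 2)) =
      (2 * s * c) ^ (a - 1) * 2 ^ a *
        (y ^ a / ((y ^ 2 + 1) * (y * c + s) ^ (2 * a))) := by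
  have hD : 0 < y * c + s := by positivity
  have hS : 0 < 2 * s * c := by positivity
  have e1 : 1 - ((y * c - s) / (y * c + s)) ^ 2 = 2 * y * (2 * s * c) / (y * c + s) ^ 2 := by
    field_simp
    ring
  have e2 : 1 - 2 * ((y * c - s) / (y * c + s)) * (c ^ 2 - s ^ 2)
      + ((y * c - s) / (y * c + s)) ^ 2 = (2 * s * c) ^ 2 * (y ^ 2 + 1) / (y * c + s) ^ 2 := by
    have hs2 : s ^ 2 = 1 - c ^ 2 := by linarith
    field_simp
    ring_nf
    rw [show s ^ 4 = (s ^ 2) ^ 2 by ring, hs2]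
    ring
  rw [e1, e2, abs_of_pos (by positivity), div_rpow (by positivity) (by positivity),
    mul_rpow (by positivity) hS.le, mul_rpow (by norm_num) hy.le, rpow_sub_one hS.ne',
    rpow_mul hD.le, rpow_two]
  have : 0 < ((y * c + s) ^ 2) ^ a := by positivity
  generalize (2 * s * c) ^ a = A
  generalize ((y * c + s) ^ 2) ^ a = B at *
  field_simp

/-- The change of variables `(1+r)/(1-r) = y cot(θ/2)` in the Schur-test
integral. -/
theorem schur_integral_change_of_variables (p : ℝ) (hp : 1 < p)
    (θ : ℝ) (hθ : θ ∈ Set.Ioo (0 : ℝ) π) :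
    Real.sin θ ^ ((p - 1) / p) *
        ∫ r in (-1 : ℝ)..1, (1 - r ^ 2) ^ (1 / p) / (1 - 2 * r * Real.cos θ + r ^ 2) =
      (2 : ℝ) ^ (1 / p) *
        ∫ y in Set.Ioi (0 : ℝ),
          y ^ (1 / p) /
            ((y ^ 2 + 1) * (y * Real.cos (θ / 2) + Real.sin (θ / 2)) ^ (2 / p)) := by
  obtain ⟨h0, hπ⟩ := hθ
  have hs : 0 < Real.sin (θ / 2) := sin_pos_of_pos_of_lt_pi (by linarith) (by linarith)
  have hc : 0 < Real.cos (θ / 2) := cos_pos_of_mem_Ioo ⟨by linarith, by linarith⟩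
  have h1 := Real.sin_sq_add_cos_sq (θ / 2)
  have hsin : Real.sin θ = 2 * Real.sin (θ / 2) * Real.cos (θ / 2) := by
    rw [← Real.sin_two_mul]; congr 1; ring
  have hcos : Real.cos θ = Real.cos (θ / 2) ^ 2 - Real.sin (θ / 2) ^ 2 := by
    rw [← Real.cos_two_mul']; congr 1; ring
  rw [hsin, hcos]
  generalize Real.sin (θ / 2) = s at *
  generalize Real.cos (θ / 2) = c at *
  have hS : 0 < 2 * s * c := by positivity
  rw [intervalIntegral.integral_of_le (by norm_num), integral_Ioc_eq_integral_Ioo,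
    ← schurSubst_image hc hs,
    integral_image_eq_integral_abs_deriv_smul measurableSet_Ioi
      (fun y hy => (schurSubst_hasDerivAt hc hs hy).hasDerivWithinAt) (schurSubst_injOn hc hs)]
  simp only [smul_eq_mul]
  rw [setIntegral_congr_fun measurableSet_Ioi
    (fun y hy => schurSubst_integrand (a := 1 / p) hc hs hy h1), integral_const_mul,
    ← mul_assoc, ← mul_assoc, ← rpow_add hS]
  have e : (p - 1) / p + (1 / p - 1) = 0 := by
    field_simp
    ring
  rw [e, rpow_zero, one_mul, mul_one_div]
end

section
/- Let $1<p<\infty$ and define $F(\theta)=\int_0^{\pi/2}\frac{\sin^{1/p}x\,\cos^{1/p}x}{\sin^{2/p}\big(x+\frac{\theta}{2}\big)}\,dx$ for $\theta\in[0,\pi]$. Then $F$ is twice differentiable on $(0,\pi)$ and $F''(\theta)=\frac{1}{2p}\int_0^{\pi/2}\frac{\sin^{1/p}x\,\cos^{1/p}x}{\sin^{2+\frac{2}{p}}\big(x+\frac{\theta}{2}\big)}\Big[\big(1+\tfrac{2}{p}\big)\cos^2\big(x+\tfrac{\theta}{2}\big)+\sin^2\big(x+\tfrac{\theta}{2}\big)\Big]\,dx$.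 -/
/-!
For `θ ∈ (0, π)` and `x ∈ [0, π/2]` the argument `x + θ/2` stays in the open interval `(0, π)`,
where `sin` is positive, and for `θ` in a small neighbourhood it stays in a compact subinterval.
Hence the integrand is smooth in `θ` with derivatives dominated by a constant multiple of the
continuous weight `sin^{1/p} x cos^{1/p} x`, and differentiation under the integral sign is
legitimate. `hasDerivAt_integral_weight` records this for a general kernel `g (x + θ/2)`; it is
applied to `g = sin^{-2/p}` and then to half of the derivative of that function.
-/

open Real MeasureTheory

/-- Differentiation under the integral sign for a continuous weight against a kernel
`g (x + θ / 2)`, where `g` is continuously differentiable on `(0, π)`. No control of `g` at the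
endpoints is needed, since `x + θ / 2` ranges over a compact subset of `(0, π)`. -/
lemma hasDerivAt_integral_weight {w g g' : ℝ → ℝ} (hw : Continuous w)
    (hg : ∀ t ∈ Set.Ioo 0 π, HasDerivAt g (g' t) t) (hg' : ContinuousOn g' (Set.Ioo 0 π))
    {θ : ℝ} (hθ : θ ∈ Set.Ioo 0 π) :
    HasDerivAt (fun θ => ∫ x in (0 : ℝ)..(π / 2), w x * g (x + θ / 2))
      (∫ x in (0 : ℝ)..(π / 2), w x * (g' (x + θ / 2) / 2)) θ := by
  obtain ⟨h0, h1⟩ := hθ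
  have hpi : (0 : ℝ) ≤ π / 2 := by positivity
  have hgc : ContinuousOn g (Set.Ioo 0 π) := fun t ht => (hg t ht).continuousAt.continuousWithinAt
  -- integrands built from a continuous kernel on `(0, π)` are continuous on `[0, π/2]`
  have hcont : ∀ h : ℝ → ℝ, ContinuousOn h (Set.Ioo 0 π) → ∀ τ ∈ Set.Ioo 0 π,
      ContinuousOn (fun x => w x * h (x + τ / 2)) (Set.uIcc 0 (π / 2)) := by
    intro h hh τ hτ
    refine hw.continuousOn.mul (hh.comp (by fun_prop) ?_)
    intro x hx
    rw [Set.uIcc_of_le hpi] at hx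
    obtain ⟨hx0, hx1⟩ := hx
    obtain ⟨ht0, ht1⟩ := hτ
    constructor <;> linarith
  have hmeas : ∀ h : ℝ → ℝ, ContinuousOn h (Set.Ioo 0 π) → ∀ τ ∈ Set.Ioo 0 π,
      AEStronglyMeasurable (fun x => w x * h (x + τ / 2))
        (volume.restrict (Set.uIoc 0 (π / 2))) := fun h hh τ hτ =>
    ((hcont h hh τ hτ).mono Set.uIoc_subset_uIcc).aestronglyMeasurable measurableSet_uIoc
  obtain ⟨C, hC⟩ :=
    (isCompact_Icc (a := θ / 4) (b := π / 2 + (θ + π) / 4)).exists_bound_of_continuousOn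
    (hg'.mono (fun t ht => ⟨by linarith [ht.1], by linarith [ht.2]⟩))
  refine (intervalIntegral.hasDerivAt_integral_of_dominated_loc_of_deriv_le
    (s := Set.Ioo (θ / 2) ((θ + π) / 2)) (bound := fun x => |w x| * (C / 2))
    (F' := fun τ x => w x * (g' (x + τ / 2) / 2))
    (Ioo_mem_nhds (by linarith) (by linarith)) ?_ ?_ ?_ ?_ ?_ ?_).2
  · filter_upwards [Ioo_mem_nhds h0 h1] with τ hτ using hmeas g hgc τ hτ
  · exact (hcont g hgc θ ⟨h0, h1⟩).intervalIntegrable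
  · exact hmeas (fun t => g' t / 2) (hg'.div_const 2) θ ⟨h0, h1⟩
  · refine Filter.Eventually.of_forall fun x hx τ hτ => ?_
    rw [Set.uIoc_of_le hpi] at hx
    obtain ⟨hx0, hx1⟩ := hx
    obtain ⟨ht0, ht1⟩ := hτ
    have := hC (x + τ / 2) ⟨by linarith, by linarith⟩
    rw [norm_mul, Real.norm_eq_abs, norm_div, Real.norm_ofNat]
    gcongr
  · exact (hw.abs.mul continuous_const).intervalIntegrable _ _
  · refine Filter.Eventually.of_forall fun x hx τ hτ => ?_
    rw [Set.uIoc_of_le hpi] at hx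
    obtain ⟨hx0, hx1⟩ := hx
    obtain ⟨ht0, ht1⟩ := hτ
    have h2 : HasDerivAt (fun τ : ℝ => x + τ / 2) (1 / 2) τ :=
      ((hasDerivAt_id τ).div_const 2).const_add x
    have h3 := ((hg (x + τ / 2) ⟨by linarith, by linarith⟩).comp τ h2).const_mul (w x)
    rwa [mul_one_div] at h3

/-- `F` is twice differentiable on `(0, π)` with the stated second derivative,
obtained by differentiating twice under the integral sign. -/
theorem F_second_derivative (p : ℝ) (hp : 1 < p)
    (F : ℝ → ℝ)
    (hF : ∀ θ ∈ Set.Icc (0 : ℝ) π,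
      F θ = ∫ x in (0 : ℝ)..(π / 2),
        Real.sin x ^ (1 / p) * Real.cos x ^ (1 / p) / Real.sin (x + θ / 2) ^ (2 / p)) :
    (∀ θ ∈ Set.Ioo (0 : ℝ) π, DifferentiableAt ℝ F θ) ∧
    (∀ θ ∈ Set.Ioo (0 : ℝ) π, DifferentiableAt ℝ (deriv F) θ) ∧
    (∀ θ ∈ Set.Ioo (0 : ℝ) π,
      deriv (deriv F) θ =
        (1 / (2 * p)) * ∫ x in (0 : ℝ)..(π / 2),
          Real.sin x ^ (1 / p) * Real.cos x ^ (1 / p) /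
              Real.sin (x + θ / 2) ^ (2 + 2 / p) *
            ((1 + 2 / p) * Real.cos (x + θ / 2) ^ 2 + Real.sin (x + θ / 2) ^ 2)) := by
  have hp0 : 0 < p := by linarith
  have hpi : (0 : ℝ) ≤ π / 2 := by positivity
  have hsin : ∀ t ∈ Set.Ioo 0 π, 0 < sin t := fun t ht => sin_pos_of_mem_Ioo ht
  set w : ℝ → ℝ := fun x => sin x ^ (1 / p) * cos x ^ (1 / p) with hw_def
  have hw : Continuous w :=
    (continuous_sin.rpow_const fun _ => Or.inr (by positivity)).mul
      (continuous_cos.rpow_const fun _ => Or.inr (by positivity))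
  have hpow : ∀ a : ℝ, ∀ t ∈ Set.Ioo 0 π,
      HasDerivAt (fun t => sin t ^ a) (cos t * a * sin t ^ (a - 1)) t := fun a t ht =>
    (hasDerivAt_sin t).rpow_const (Or.inl (hsin t ht).ne')
  have hpowc : ∀ a : ℝ, ContinuousOn (fun t => sin t ^ a) (Set.Ioo 0 π) := fun a t ht =>
    (hpow a t ht).continuousAt.continuousWithinAt
  set a : ℝ := -(2 / p) with ha
  set g1 : ℝ → ℝ := fun t => cos t * a * sin t ^ (a - 1) with hg1
  set g2 : ℝ → ℝ := fun t =>
    (-sin t * a * sin t ^ (a - 1) + cos t * a * (cos t * (a - 1) * sin t ^ (a - 1 - 1))) / 2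
    with hg2
  have hg1c : ContinuousOn g1 (Set.Ioo 0 π) :=
    (by fun_prop : ContinuousOn (fun t => cos t * a) _).mul (hpowc _)
  have hg2c : ContinuousOn g2 (Set.Ioo 0 π) :=
    (((by fun_prop : ContinuousOn (fun t => -sin t * a) _).mul (hpowc _)).add
      ((by fun_prop : ContinuousOn (fun t => cos t * a) _).mul
        ((by fun_prop : ContinuousOn (fun t => cos t * (a - 1)) _).mul (hpowc _)))).div_const 2
  have hg2d : ∀ t ∈ Set.Ioo 0 π, HasDerivAt (fun t => g1 t / 2) (g2 t) t := fun t ht =>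
    ((((hasDerivAt_cos t).mul_const a).mul (hpow (a - 1) t ht)).div_const 2)
  have hd1 : ∀ θ ∈ Set.Ioo 0 π,
      HasDerivAt F (∫ x in (0 : ℝ)..(π / 2), w x * (g1 (x + θ / 2) / 2)) θ := by
    intro θ hθ
    refine (hasDerivAt_integral_weight hw (hpow a) hg1c hθ).congr_of_eventuallyEq ?_
    filter_upwards [Ioo_mem_nhds hθ.1 hθ.2] with τ hτ
    rw [hF τ ⟨hτ.1.le, hτ.2.le⟩]
    refine intervalIntegral.integral_congr fun x hx => ?_
    rw [Set.uIcc_of_le hpi] at hx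
    have hs := hsin (x + τ / 2) ⟨by linarith [hx.1, hτ.1], by linarith [hx.2, hτ.2]⟩
    simp only [ha, hw_def]
    rw [rpow_neg hs.le, div_eq_mul_inv]
  have hd2 : ∀ θ ∈ Set.Ioo 0 π,
      HasDerivAt (deriv F) (∫ x in (0 : ℝ)..(π / 2), w x * (g2 (x + θ / 2) / 2)) θ := by
    intro θ hθ
    refine (hasDerivAt_integral_weight hw hg2d hg2c hθ).congr_of_eventuallyEq ?_
    filter_upwards [Ioo_mem_nhds hθ.1 hθ.2] with τ hτ using (hd1 τ hτ).deriv
  refine ⟨fun θ hθ => (hd1 θ hθ).differentiableAt, fun θ hθ => (hd2 θ hθ).differentiableAt,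
    fun θ hθ => ?_⟩
  rw [(hd2 θ hθ).deriv, ← intervalIntegral.integral_const_mul]
  refine intervalIntegral.integral_congr fun x hx => ?_
  rw [Set.uIcc_of_le hpi] at hx
  have hs := hsin (x + θ / 2) ⟨by linarith [hx.1, hθ.1], by linarith [hx.2, hθ.2]⟩
  simp only [hg2]
  set S := sin (x + θ / 2)
  -- all powers of `S` are expressed through `S ^ (a - 2)`
  have e1 : S ^ (a - 1) = S * S ^ (a - 1 - 1) := by
    rw [rpow_sub_one hs.ne' (a - 1)]; field_simp
  have e2 : S ^ (2 + 2 / p) = (S ^ (a - 1 - 1))⁻¹ := by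
    rw [← rpow_neg hs.le]; congr 1; rw [ha]; ring
  rw [e1, e2, div_inv_eq_mul, ha]
  field_simp
  ring
end

section
/- Let $1<p<\infty$ and define $F(\theta)=\int_0^{\pi/2}\frac{\sin^{1/p}x\,\cos^{1/p}x}{\sin^{2/p}\big(x+\frac{\theta}{2}\big)}\,dx$ for $\theta\in[0,\pi]$. Then $F$ is convex on the interval $[0,\pi]$. -/
open Real MeasureTheory

/-!
The integrand is convex in `θ` for each fixed `x`: for `0 < x < π / 2` and `θ ∈ [0, π]` the point
`x + θ / 2` lies in `(0, π)`, where `sin` is positive and concave, and `s ↦ s ^ (-q)` is convex and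
decreasing on `(0, ∞)` for `q ≥ 0` (`sin_rpow_neg_le`). At `x = 0` and `x = π / 2` the numerator
vanishes, so the convexity inequality is `0 ≤ 0` (`kernel_convex`).

Integrating requires integrability of the integrand for every `θ ∈ [0, π]`. By the same convexity
inequality it is dominated by a combination of the integrands at `θ = 0` and `θ = π`. The first is
at most `sin x ^ (-1 / p)`, which is integrable by Jordan's inequality `2 / π * x ≤ sin x` because
`1 / p < 1`, and the second is the first reflected under `x ↦ π / 2 - x`.
-/

/-- The integrand of `F θ`, as a function of `x`. -/
noncomputable def kernel (p θ x : ℝ) : ℝ :=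
  Real.sin x ^ (1 / p) * Real.cos x ^ (1 / p) / Real.sin (x + θ / 2) ^ (2 / p)

/-- Convexity of `s ↦ s ^ (-q)` on `(0, ∞)`: it is `exp` of `-q * log s`, which is convex. -/
lemma rpow_neg_convex {q : ℝ} (hq : 0 ≤ q) {s t a b : ℝ} (hs : 0 < s) (ht : 0 < t)
    (ha : 0 ≤ a) (hb : 0 ≤ b) (hab : a + b = 1) :
    (a * s + b * t) ^ (-q) ≤ a * s ^ (-q) + b * t ^ (-q) := by
  have hpos : 0 < a * s + b * t := by
    have := (convex_Ioi (0 : ℝ)) (Set.mem_Ioi.2 hs) (Set.mem_Ioi.2 ht) ha hb hab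
    simpa using this
  have hlog : a * log s + b * log t ≤ log (a * s + b * t) := by
    simpa using strictConcaveOn_log_Ioi.concaveOn.2 (Set.mem_Ioi.2 hs) (Set.mem_Ioi.2 ht) ha hb hab
  have hexp := convexOn_exp.2 (Set.mem_univ (log s * -q)) (Set.mem_univ (log t * -q)) ha hb hab
  simp only [smul_eq_mul] at hexp
  rw [rpow_def_of_pos hpos, rpow_def_of_pos hs, rpow_def_of_pos ht]
  refine le_trans (exp_le_exp.2 ?_) hexp
  nlinarith [mul_le_mul_of_nonneg_left hlog hq]

lemma sin_rpow_neg_le {q : ℝ} (hq : 0 ≤ q) {u v a b : ℝ} (hu : u ∈ Set.Ioo 0 π)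
    (hv : v ∈ Set.Ioo 0 π) (ha : 0 ≤ a) (hb : 0 ≤ b) (hab : a + b = 1) :
    sin (a * u + b * v) ^ (-q) ≤ a * sin u ^ (-q) + b * sin v ^ (-q) := by
  have hsu := sin_pos_of_mem_Ioo hu
  have hsv := sin_pos_of_mem_Ioo hv
  have hpos : 0 < a * sin u + b * sin v := by
    have := (convex_Ioi (0 : ℝ)) (Set.mem_Ioi.2 hsu) (Set.mem_Ioi.2 hsv) ha hb hab
    simpa using this
  have hconc : a * sin u + b * sin v ≤ sin (a * u + b * v) := by
    simpa using strictConcaveOn_sin_Icc.concaveOn.2 (Set.Ioo_subset_Icc_self hu)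
      (Set.Ioo_subset_Icc_self hv) ha hb hab
  exact (rpow_le_rpow_of_nonpos hpos hconc (by linarith)).trans
    (rpow_neg_convex hq hsu hsv ha hb hab)

lemma kernel_nonneg {p θ x : ℝ} (hθ : θ ∈ Set.Icc 0 π) (hx : x ∈ Set.Icc 0 (π / 2)) :
    0 ≤ kernel p θ x := by
  obtain ⟨h1, h2⟩ := hθ
  obtain ⟨h3, h4⟩ := hx
  have := sin_nonneg_of_nonneg_of_le_pi h3 (by linarith)
  have := cos_nonneg_of_neg_pi_div_two_le_of_le (x := x) (by linarith) h4
  have := sin_nonneg_of_nonneg_of_le_pi (x := x + θ / 2) (by linarith) (by linarith)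
  unfold kernel
  positivity

lemma kernel_convex {p : ℝ} (hp : 1 < p) {x : ℝ} (hx : x ∈ Set.Icc 0 (π / 2)) {θ η a b : ℝ}
    (hθ : θ ∈ Set.Icc 0 π) (hη : η ∈ Set.Icc 0 π) (ha : 0 ≤ a) (hb : 0 ≤ b) (hab : a + b = 1) :
    kernel p (a * θ + b * η) x ≤ a * kernel p θ x + b * kernel p η x := by
  have hp0 : p⁻¹ ≠ 0 := by positivity
  obtain ⟨h0, h1⟩ := hx
  obtain ⟨h2, h3⟩ := hθ
  obtain ⟨h4, h5⟩ := hη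
  rcases h0.eq_or_lt with rfl | h0
  · simp [kernel, zero_rpow hp0]
  rcases h1.eq_or_lt with rfl | h1
  · simp [kernel, zero_rpow hp0]
  have hu : x + θ / 2 ∈ Set.Ioo 0 π := ⟨by linarith, by linarith⟩
  have hv : x + η / 2 ∈ Set.Ioo 0 π := ⟨by linarith, by linarith⟩
  have hq : 0 ≤ 2 / p := by positivity
  have hle := sin_rpow_neg_le hq hu hv ha hb hab
  have harg : a * (x + θ / 2) + b * (x + η / 2) = x + (a * θ + b * η) / 2 := by
    linear_combination x * hab
  rw [harg] at hle
  have hw : x + (a * θ + b * η) / 2 ∈ Set.Ioo 0 π := by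
    rw [← harg]
    simpa using convex_Ioo 0 π hu hv ha hb hab
  rw [rpow_neg (sin_pos_of_mem_Ioo hw).le, rpow_neg (sin_pos_of_mem_Ioo hu).le,
    rpow_neg (sin_pos_of_mem_Ioo hv).le] at hle
  have hsx : 0 ≤ sin x := sin_nonneg_of_nonneg_of_le_pi h0.le (by linarith)
  have hcx : 0 ≤ cos x := cos_nonneg_of_neg_pi_div_two_le_of_le (by linarith) h1.le
  have hnum : 0 ≤ sin x ^ (1 / p) * cos x ^ (1 / p) := by positivity
  unfold kernel
  simp only [div_eq_mul_inv _ (sin _ ^ (2 / p))]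
  linarith [mul_le_mul_of_nonneg_left hle hnum]

lemma measurable_kernel (p θ : ℝ) : Measurable (kernel p θ) := by
  unfold kernel
  fun_prop

lemma intervalIntegrable_kernel_zero {p : ℝ} (hp : 1 < p) :
    IntervalIntegrable (kernel p 0) volume 0 (π / 2) := by
  have hlt : -1 < -(1 / p) := by
    have : 1 / p < 1 := by rw [div_lt_one (by linarith)]; exact hp
    linarith
  have hdom : IntervalIntegrable (fun x : ℝ => (2 / π) ^ (-(1 / p)) * x ^ (-(1 / p)))
      volume 0 (π / 2) := (intervalIntegral.intervalIntegrable_rpow' hlt).const_mul _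
  refine hdom.mono_fun' (measurable_kernel p 0).aestronglyMeasurable ?_
  filter_upwards [ae_restrict_mem measurableSet_uIoc] with x hx
  rw [Set.uIoc_of_le pi_div_two_pos.le] at hx
  obtain ⟨h0, h1⟩ := hx
  rw [norm_of_nonneg (kernel_nonneg ⟨le_rfl, pi_pos.le⟩ ⟨h0.le, h1⟩)]
  have hs : 0 < sin x := sin_pos_of_pos_of_lt_pi h0 (by linarith [pi_pos])
  have hc : 0 ≤ cos x := cos_nonneg_of_neg_pi_div_two_le_of_le (by linarith) h1
  have hc1 : cos x ^ (1 / p) ≤ 1 := rpow_le_one hc (cos_le_one x) (by positivity)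
  have hexp : sin x ^ (1 / p) / sin x ^ (2 / p) = sin x ^ (-(1 / p)) := by
    rw [← rpow_sub hs]
    congr 1
    ring
  calc kernel p 0 x = sin x ^ (-(1 / p)) * cos x ^ (1 / p) := by
        rw [← hexp]
        simp only [kernel, zero_div, add_zero]
        ring
    _ ≤ sin x ^ (-(1 / p)) := mul_le_of_le_one_right (by positivity) hc1
    _ ≤ (2 / π * x) ^ (-(1 / p)) :=
        rpow_le_rpow_of_nonpos (by positivity) (mul_le_sin h0.le h1) (by
          have : 0 < 1 / p := by positivity
          linarith)
    _ = (2 / π) ^ (-(1 / p)) * x ^ (-(1 / p)) := mul_rpow (by positivity) h0.le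

lemma kernel_pi_eq_reflect (p x : ℝ) : kernel p π x = kernel p 0 (π / 2 - x) := by
  simp only [kernel, sin_add_pi_div_two, sin_pi_div_two_sub, cos_pi_div_two_sub, zero_div, add_zero]
  ring

lemma intervalIntegrable_kernel_pi {p : ℝ} (hp : 1 < p) :
    IntervalIntegrable (kernel p π) volume 0 (π / 2) := by
  have h := ((intervalIntegrable_kernel_zero hp).comp_sub_left (π / 2)).symm
  simp only [sub_self, sub_zero] at h
  exact (funext (kernel_pi_eq_reflect p)) ▸ h

lemma intervalIntegrable_kernel {p : ℝ} (hp : 1 < p) {θ : ℝ} (hθ : θ ∈ Set.Icc 0 π) :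
    IntervalIntegrable (kernel p θ) volume 0 (π / 2) := by
  have hdom := ((intervalIntegrable_kernel_zero hp).const_mul (1 - θ / π)).add
    ((intervalIntegrable_kernel_pi hp).const_mul (θ / π))
  refine hdom.mono_fun' (measurable_kernel p θ).aestronglyMeasurable ?_
  filter_upwards [ae_restrict_mem measurableSet_uIoc] with x hx
  rw [Set.uIoc_of_le pi_div_two_pos.le] at hx
  have hx' := Set.Ioc_subset_Icc_self hx
  rw [norm_of_nonneg (kernel_nonneg hθ hx')]
  have hle1 : θ / π ≤ 1 := (div_le_one pi_pos).2 hθ.2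
  have h := kernel_convex hp hx' (θ := 0) (η := π) ⟨le_rfl, pi_pos.le⟩ ⟨pi_pos.le, le_rfl⟩
    (sub_nonneg.2 hle1) (div_nonneg hθ.1 pi_pos.le) (sub_add_cancel _ _)
  rwa [mul_zero, zero_add, div_mul_cancel₀ _ pi_pos.ne'] at h

/-- The function `F` is convex on `[0, π]`. -/
theorem F_convex (p : ℝ) (hp : 1 < p)
    (F : ℝ → ℝ)
    (hF : ∀ θ ∈ Set.Icc (0 : ℝ) π,
      F θ = ∫ x in (0 : ℝ)..(π / 2),
        Real.sin x ^ (1 / p) * Real.cos x ^ (1 / p) / Real.sin (x + θ / 2) ^ (2 / p)) :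
    ConvexOn ℝ (Set.Icc (0 : ℝ) π) F := by
  have hF' : ∀ θ ∈ Set.Icc (0 : ℝ) π, F θ = ∫ x in (0 : ℝ)..(π / 2), kernel p θ x := hF
  refine ⟨convex_Icc 0 π, fun θ hθ η hη a b ha hb hab => ?_⟩
  have hmem := convex_Icc 0 π hθ hη ha hb hab
  rw [hF' _ hmem, hF' θ hθ, hF' η hη]
  simp only [smul_eq_mul] at hmem ⊢
  have h1 := (intervalIntegrable_kernel hp hθ).const_mul a
  have h2 := (intervalIntegrable_kernel hp hη).const_mul b
  rw [← intervalIntegral.integral_const_mul, ← intervalIntegral.integral_const_mul,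
    ← intervalIntegral.integral_add h1 h2]
  exact intervalIntegral.integral_mono_on pi_div_two_pos.le (intervalIntegrable_kernel hp hmem)
    (h1.add h2) fun x hx => kernel_convex hp hx hθ hη ha hb hab
end

section
/- Let $1<p<\infty$. For every $\theta\in[0,\pi]$, $F(\theta)=\int_0^{\pi/2}\frac{\sin^{1/p}x\,\cos^{1/p}x}{\sin^{2/p}\big(x+\frac{\theta}{2}\big)}\,dx\le\frac{\pi}{2\cos\frac{\pi}{2p}}$. -/
/-!
Put `a = 1 / p` and `t = θ / π ∈ [0, 1]`. As `x + θ / 2 = (1 - t) x + t (x + π / 2)`, concavity of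
`sin` on `[0, π]` followed by the weighted AM-GM inequality gives, for `0 < x < π / 2`,
`sin (x + θ / 2) ≥ (1 - t) sin x + t cos x ≥ (sin x) ^ (1 - t) * (cos x) ^ t`
(`sin_rpow_mul_cos_rpow_le`). Hence the integrand is at most `(sin x) ^ b * (cos x) ^ (-b)` with
`b = a (2 t - 1)`, so that `|b| ≤ a < 1`.

The substitution `y = sin² x` turns `∫ (sin x) ^ b * (cos x) ^ (-b)` into half the Beta integral
`B ((1 + b) / 2, (1 - b) / 2)`, and Euler's reflection formula evaluates it to
`π / (2 cos (π b / 2))` (`sin_rpow_mul_cos_rpow_neg`). This is at most `π / (2 cos (π a / 2))`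
because `cos` is even and decreasing on `[0, π]`. The argument replaces the convexity of `F` by a
pointwise bound, and it needs no separate proof that the original integrand is integrable.
-/

open Real MeasureTheory

/-- The real Beta integral with complementary parameters, with integrability. -/
lemma beta_one_sub (u : ℝ) (hu : 0 < u) (hu1 : u < 1) :
    IntegrableOn (fun y : ℝ => y ^ (u - 1) * (1 - y) ^ (-u)) (Set.Ioo 0 1) ∧
      ∫ y in Set.Ioo (0 : ℝ) 1, y ^ (u - 1) * (1 - y) ^ (-u) = π / sin (π * u) := by
  have h1 : 0 < (u : ℂ).re := by simpa using hu
  have h2 : 0 < (1 - u : ℂ).re := by simpa using hu1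
  have hc := Complex.betaIntegral_convergent h1 h2
  rw [intervalIntegrable_iff_integrableOn_Ioo_of_le zero_le_one] at hc
  have heq : Set.EqOn (fun y : ℝ => (y : ℂ) ^ ((u : ℂ) - 1) * (1 - (y : ℂ)) ^ ((1 - u : ℂ) - 1))
      (fun y : ℝ => ((y ^ (u - 1) * (1 - y) ^ (-u) : ℝ) : ℂ)) (Set.Ioo 0 1) := by
    intro y hy
    simp only
    rw [Complex.ofReal_mul, Complex.ofReal_cpow hy.1.le, Complex.ofReal_cpow (by linarith [hy.2])]
    push_cast
    ring_nf
  have hint : IntegrableOn (fun y : ℝ => ((y ^ (u - 1) * (1 - y) ^ (-u) : ℝ) : ℂ))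
      (Set.Ioo 0 1) := hc.congr_fun heq measurableSet_Ioo
  refine ⟨by simpa [IntegrableOn] using hint.re, ?_⟩
  have hb := Complex.Gamma_mul_Gamma_eq_betaIntegral h1 h2
  rw [Complex.Gamma_mul_Gamma_one_sub, add_sub_cancel, Complex.Gamma_one, one_mul,
    Complex.betaIntegral, intervalIntegral.integral_of_le zero_le_one,
    integral_Ioc_eq_integral_Ioo, setIntegral_congr_fun measurableSet_Ioo heq,
    integral_complex_ofReal] at hb
  exact_mod_cast hb.symm

lemma sin_sq_image : (fun x : ℝ => sin x ^ 2) '' Set.Ioo 0 (π / 2) = Set.Ioo 0 1 := by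
  ext y
  constructor
  · rintro ⟨x, hx, rfl⟩
    have hs : 0 < sin x := sin_pos_of_pos_of_lt_pi hx.1 (by linarith [hx.2, pi_pos])
    have hc : 0 < cos x := cos_pos_of_mem_Ioo ⟨by linarith [hx.1, pi_pos], hx.2⟩
    exact ⟨by positivity, by nlinarith [sin_sq_add_cos_sq x]⟩
  · rintro ⟨h0, h1⟩
    have hr0 : 0 < √y := sqrt_pos.mpr h0
    have hr1 : √y < 1 := by rw [sqrt_lt' one_pos]; simpa using h1
    refine ⟨arcsin √y, ⟨arcsin_pos.mpr hr0, arcsin_lt_pi_div_two.mpr hr1⟩, ?_⟩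
    simp only
    rw [sin_arcsin (by linarith) hr1.le, sq_sqrt h0.le]

/-- The substitution `y = sin² x` in the Beta integral. -/
lemma sin_rpow_mul_cos_rpow_neg (b : ℝ) (hb : |b| < 1) :
    IntegrableOn (fun x : ℝ => sin x ^ b * cos x ^ (-b)) (Set.Ioo 0 (π / 2)) ∧
      ∫ x in Set.Ioo (0 : ℝ) (π / 2), sin x ^ b * cos x ^ (-b) = π / (2 * cos (π * b / 2)) := by
  obtain ⟨hb1, hb2⟩ := abs_lt.mp hb
  obtain ⟨hint, hval⟩ := beta_one_sub ((1 + b) / 2) (by linarith) (by linarith)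
  have hderiv : ∀ x ∈ Set.Ioo (0 : ℝ) (π / 2),
      HasDerivWithinAt (fun x : ℝ => sin x ^ 2) (2 * sin x * cos x) (Set.Ioo 0 (π / 2)) x := by
    intro x _
    simpa using ((hasDerivAt_sin x).fun_pow 2).hasDerivWithinAt
  have hinj : Set.InjOn (fun x : ℝ => sin x ^ 2) (Set.Ioo 0 (π / 2)) := by
    intro x hx y hy hxy
    have hsx : 0 < sin x := sin_pos_of_pos_of_lt_pi hx.1 (by linarith [hx.2, pi_pos])
    have hsy : 0 < sin y := sin_pos_of_pos_of_lt_pi hy.1 (by linarith [hy.2, pi_pos])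
    have h : sin x = sin y := (pow_left_inj₀ hsx.le hsy.le two_ne_zero).mp hxy
    exact injOn_sin ⟨by linarith [hx.1, pi_pos], hx.2.le⟩ ⟨by linarith [hy.1, pi_pos], hy.2.le⟩ h
  have heq : Set.EqOn (fun x : ℝ => |2 * sin x * cos x| •
        ((sin x ^ 2) ^ ((1 + b) / 2 - 1) * (1 - sin x ^ 2) ^ (-((1 + b) / 2))))
      (fun x : ℝ => 2 * (sin x ^ b * cos x ^ (-b))) (Set.Ioo 0 (π / 2)) := by
    intro x hx
    have hs : 0 < sin x := sin_pos_of_pos_of_lt_pi hx.1 (by linarith [hx.2, pi_pos])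
    have hc : 0 < cos x := cos_pos_of_mem_Ioo ⟨by linarith [hx.1, pi_pos], hx.2⟩
    simp only [smul_eq_mul]
    rw [abs_of_pos (by positivity), ← cos_sq', ← rpow_natCast, ← rpow_natCast, ← rpow_mul hs.le,
      ← rpow_mul hc.le]
    have e1 : sin x ^ b = sin x * sin x ^ (((2 : ℕ) : ℝ) * ((1 + b) / 2 - 1)) := by
      nth_rewrite 2 [← rpow_one (sin x)]
      rw [← rpow_add hs]
      push_cast
      ring_nf
    have e2 : cos x ^ (-b) = cos x * cos x ^ (((2 : ℕ) : ℝ) * (-((1 + b) / 2))) := by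
      nth_rewrite 2 [← rpow_one (cos x)]
      rw [← rpow_add hc]
      push_cast
      ring_nf
    rw [e1, e2]
    ring
  have hval' := integral_image_eq_integral_abs_deriv_smul measurableSet_Ioo hderiv hinj
    (fun y : ℝ => y ^ ((1 + b) / 2 - 1) * (1 - y) ^ (-((1 + b) / 2)))
  have hint' := (integrableOn_image_iff_integrableOn_abs_deriv_smul measurableSet_Ioo hderiv hinj
    (fun y : ℝ => y ^ ((1 + b) / 2 - 1) * (1 - y) ^ (-((1 + b) / 2)))).mp
      (by rw [sin_sq_image]; exact hint)
  have hint2 := hint'.congr_fun heq measurableSet_Ioo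
  rw [sin_sq_image, hval, setIntegral_congr_fun measurableSet_Ioo heq,
    integral_const_mul] at hval'
  refine ⟨?_, ?_⟩
  · have : IntegrableOn (fun x : ℝ => 1 / 2 * (2 * (sin x ^ b * cos x ^ (-b))))
        (Set.Ioo 0 (π / 2)) := hint2.const_mul (1 / 2)
    refine this.congr_fun (fun x _ => ?_) measurableSet_Ioo
    simp only
    ring
  · rw [show π * ((1 + b) / 2) = π * b / 2 + π / 2 by ring, sin_add_pi_div_two] at hval'
    rw [mul_comm 2 (cos _), ← div_div, hval']
    ring

/-- Concavity of `sin` between `x` and `x + π / 2`, followed by weighted AM-GM. -/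
lemma sin_rpow_mul_cos_rpow_le (x t : ℝ) (hx : x ∈ Set.Ioo 0 (π / 2)) (ht0 : 0 ≤ t) (ht1 : t ≤ 1) :
    sin x ^ (1 - t) * cos x ^ t ≤ sin (x + t * (π / 2)) := by
  have hs : 0 < sin x := sin_pos_of_pos_of_lt_pi hx.1 (by linarith [hx.2, pi_pos])
  have hc : 0 < cos x := cos_pos_of_mem_Ioo ⟨by linarith [hx.1, pi_pos], hx.2⟩
  refine (geom_mean_le_arith_mean2_weighted (sub_nonneg.mpr ht1) ht0 hs.le hc.le
    (by ring)).trans ?_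
  have h := strictConcaveOn_sin_Icc.concaveOn.2 (x := x) (y := x + π / 2)
    ⟨hx.1.le, by linarith [hx.2, pi_pos]⟩ ⟨by linarith [hx.1, pi_pos], by linarith [hx.2]⟩
    (sub_nonneg.mpr ht1) ht0 (by ring)
  simp only [smul_eq_mul, sin_add_pi_div_two] at h
  rwa [show (1 - t) * x + t * (x + π / 2) = x + t * (π / 2) by ring] at h

/-- The key bound `F(θ) ≤ π/(2 cos(π/(2p)))` for all `θ ∈ [0, π]`. -/
theorem F_le_bound (p : ℝ) (hp : 1 < p) :
    ∀ θ ∈ Set.Icc (0 : ℝ) π,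
      (∫ x in (0 : ℝ)..(π / 2),
          Real.sin x ^ (1 / p) * Real.cos x ^ (1 / p) /
            Real.sin (x + θ / 2) ^ (2 / p)) ≤
        π / (2 * Real.cos (π / (2 * p))) := by
  rintro θ ⟨hθ0, hθ1⟩
  have hpi := pi_pos
  obtain ⟨t, rfl⟩ : ∃ t, θ = t * π := ⟨θ / π, by field_simp⟩
  have ht0 : 0 ≤ t := by by_contra! h; nlinarith
  have ht1 : t ≤ 1 := by by_contra! h; nlinarith
  set a := 1 / p with ha
  have ha0 : 0 < a := by positivity
  have ha1 : a < 1 := by rw [ha, div_lt_one (by linarith)]; exact hp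
  rw [show 2 / p = 2 * a by rw [ha]; ring, show π / (2 * p) = π * a / 2 by rw [ha]; field_simp,
    show t * π / 2 = t * (π / 2) by ring]
  have hab : |a * (2 * t - 1)| ≤ a := by rw [abs_le]; constructor <;> nlinarith
  obtain ⟨hint, hval⟩ := sin_rpow_mul_cos_rpow_neg (a * (2 * t - 1)) (hab.trans_lt ha1)
  rw [intervalIntegral.integral_of_le (by positivity), integral_Ioc_eq_integral_Ioo]
  have hpos : ∀ x ∈ Set.Ioo 0 (π / 2), 0 < sin x ∧ 0 < cos x := fun x hx =>
    ⟨sin_pos_of_pos_of_lt_pi hx.1 (by linarith [hx.2]),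
      cos_pos_of_mem_Ioo ⟨by linarith [hx.1], hx.2⟩⟩
  calc _ ≤ ∫ x in Set.Ioo (0 : ℝ) (π / 2),
        sin x ^ (a * (2 * t - 1)) * cos x ^ (-(a * (2 * t - 1))) := by
        refine integral_mono_of_nonneg ?_ hint ?_
        · filter_upwards [ae_restrict_mem measurableSet_Ioo] with x hx
          obtain ⟨hs, hc⟩ := hpos x hx
          have h := sin_rpow_mul_cos_rpow_le x t hx ht0 ht1
          have : 0 < sin (x + t * (π / 2)) := lt_of_lt_of_le (by positivity) h
          simp only [Pi.zero_apply]
          positivity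
        · filter_upwards [ae_restrict_mem measurableSet_Ioo] with x hx
          obtain ⟨hs, hc⟩ := hpos x hx
          have h := sin_rpow_mul_cos_rpow_le x t hx ht0 ht1
          have h2 : (sin x ^ (1 - t) * cos x ^ t) ^ (2 * a) ≤ sin (x + t * (π / 2)) ^ (2 * a) :=
            rpow_le_rpow (by positivity) h (by positivity)
          refine (div_le_div_of_nonneg_left (by positivity) (by positivity) h2).trans_eq ?_
          rw [mul_rpow (by positivity) (by positivity), ← rpow_mul hs.le, ← rpow_mul hc.le,
            mul_div_mul_comm, ← rpow_sub hs, ← rpow_sub hc]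
          ring_nf
    _ = _ := hval
    _ ≤ _ := by
        have hcos : 0 < cos (π * a / 2) :=
          cos_pos_of_mem_Ioo ⟨by nlinarith, by nlinarith⟩
        have hle : cos (π * a / 2) ≤ cos (π * (a * (2 * t - 1)) / 2) := by
          rw [← cos_abs (π * (a * (2 * t - 1)) / 2)]
          refine cos_le_cos_of_nonneg_of_le_pi (abs_nonneg _) (by nlinarith) ?_
          rw [abs_div, abs_mul, abs_of_pos hpi, abs_two]
          gcongr
        gcongr
end

section
/- Let $1<p<\infty$. For every $\theta$ with $0<\theta<\pi$, $\int_0^{+\infty}\frac{y^{1/p}}{(y^2+1)\big(y\cos\frac{\theta}{2}+\sin\frac{\theta}{2}\big)^{2/p}}\,dy\le\frac{\pi}{2\cos^{p}\frac{\pi}{2p}}\,\cos^{p-1}\Big(\frac{\pi}{2p}-\frac{\theta}{p}\Big)$. -/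
open Real MeasureTheory

/-!
Write `s = 1 / p`, `C = cos (θ / 2)`, `S = sin (θ / 2)`. The integrand on the left is
`(y / (y C + S)²) ^ s / (1 + y²)`, and the rational map `z(y) = C² y - S² / y` satisfies
`z² + (2 S C)² = (C² y + S² / y)²`, so that
`(y C + S)² / y = 2 S C + √(z² + (2 S C)²) ≥ |z|`.
Hence the integral is at most `∫₀^∞ |z(y)| ^ (-s) dy / (1 + y²)`.

Since `C² + S² = 1`, the map `z` is a Boole-type transformation fixing `i`, and it preserves the
Cauchy measure `dy / (1 + y²)`. Concretely, the involution `y ↦ (S / C)² / y` of the half-line only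
changes the sign of `z`, and adding the densities at these two points gives `dz / (1 + z²)`
(`lintegral_boole_le`). The bound is therefore
`∫₀^∞ z ^ (-s) dz / (1 + z²) = π / (2 cos (π s / 2))`, which the substitution `x = z² / (1 + z²)`
turns into a Beta integral (`lintegral_rpow_div_one_add_sq_le`).

Finally `cos (π / (2p) - θ / p) ≥ cos (π / (2p))`, so the right-hand side of the theorem is at least
`π / (2 cos (π / (2p)))`.
-/

/-- Change of variables as an inequality: the image of `f` need only lie in the target set. -/
lemma lintegral_subst_le {s t : Set ℝ} {f f' : ℝ → ℝ} (hs : MeasurableSet s)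
    (hf' : ∀ x ∈ s, HasDerivAt f (f' x) x) (hf : Set.InjOn f s) (hst : Set.MapsTo f s t)
    (g : ℝ → ENNReal) :
    ∫⁻ x in s, ENNReal.ofReal |f' x| * g (f x) ≤ ∫⁻ x in t, g x := by
  rw [← lintegral_image_eq_lintegral_abs_deriv_mul hs (fun x hx => (hf' x hx).hasDerivWithinAt) hf]
  exact lintegral_mono_set hst.image_subset

lemma lintegral_rpow_div_one_add_sq_le {s : ℝ} (hs0 : 0 < s) (hs1 : s < 1) :
    ∫⁻ z in Set.Ioi (0 : ℝ), ENNReal.ofReal (z ^ (-s) / (1 + z ^ 2)) ≤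
      ENNReal.ofReal (π / (2 * cos (π * s / 2))) := by
  set a : ℝ := (1 - s) / 2 with ha
  have ha0 : 0 < a := by rw [ha]; linarith
  have ha1 : 0 < 1 - a := by rw [ha]; linarith
  set B : ℝ := ProbabilityTheory.beta a (1 - a) with hB
  have hBpos : 0 < B := ProbabilityTheory.beta_pos ha0 ha1
  have hBval : B = π / cos (π * s / 2) := by
    rw [hB, ProbabilityTheory.beta, add_sub_cancel, Real.Gamma_one, div_one,
      Real.Gamma_mul_Gamma_one_sub, ← Real.cos_pi_div_two_sub]
    congr 2
    rw [ha]; ring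
  have h1 := ProbabilityTheory.lintegral_betaPDF_eq_one ha0 ha1
  rw [ProbabilityTheory.lintegral_betaPDF] at h1
  have h2 := lintegral_subst_le (s := Set.Ioi (0 : ℝ)) (t := Set.Ioo 0 1)
    (f := fun z => z ^ 2 / (1 + z ^ 2)) (f' := fun z => 2 * z / (1 + z ^ 2) ^ 2)
    measurableSet_Ioi
    (by
      intro z _
      have hz : 1 + z ^ 2 ≠ 0 := by positivity
      have := ((hasDerivAt_id z).pow 2).div (((hasDerivAt_id z).pow 2).const_add 1) hz
      refine this.congr_deriv ?_
      simp only [id, Pi.pow_apply]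
      field_simp
      push_cast
      ring)
    (by
      intro x hx y hy hxy
      simp only [Set.mem_Ioi] at hx hy
      have h1 : 1 + x ^ 2 ≠ 0 := by positivity
      have h2 : 1 + y ^ 2 ≠ 0 := by positivity
      simp only at hxy
      rw [div_eq_div_iff h1 h2] at hxy
      have : x ^ 2 = y ^ 2 := by linarith
      exact (pow_left_inj₀ hx.le hy.le two_ne_zero).1 this)
    (by
      intro x hx
      simp only [Set.mem_Ioi] at hx
      refine ⟨by positivity, ?_⟩
      rw [div_lt_one (by positivity)]; linarith)
    (fun x => ENNReal.ofReal (1 / B * x ^ (a - 1) * (1 - x) ^ (1 - a - 1)))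
  rw [h1] at h2
  have h3 : ∀ z ∈ Set.Ioi (0 : ℝ), ENNReal.ofReal (z ^ (-s) / (1 + z ^ 2)) =
      ENNReal.ofReal (B / 2) * (ENNReal.ofReal |2 * z / (1 + z ^ 2) ^ 2| *
        ENNReal.ofReal (1 / B * (z ^ 2 / (1 + z ^ 2)) ^ (a - 1) *
          (1 - z ^ 2 / (1 + z ^ 2)) ^ (1 - a - 1))) := by
    intro z hz
    simp only [Set.mem_Ioi] at hz
    have hw : 0 < 1 + z ^ 2 := by positivity
    rw [← ENNReal.ofReal_mul (abs_nonneg _), ← ENNReal.ofReal_mul (by positivity)]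
    congr 1
    rw [abs_of_pos (by positivity)]
    have e1 : 1 - z ^ 2 / (1 + z ^ 2) = (1 + z ^ 2)⁻¹ := by field_simp; ring
    have e2 : z ^ (-s) = (z ^ 2) ^ (a - 1) * z := by
      rw [← Real.rpow_natCast z 2, ← Real.rpow_mul hz.le]
      nth_rw 3 [← Real.rpow_one z]
      rw [← Real.rpow_add hz]
      congr 1
      rw [ha]; push_cast; ring
    have e3 : (1 + z ^ 2) ^ a = (1 + z ^ 2) ^ (a - 1) * (1 + z ^ 2) := by
      rw [Real.rpow_sub_one hw.ne']; field_simp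
    rw [e1, e2, Real.div_rpow (by positivity) hw.le, Real.inv_rpow hw.le,
      show 1 - a - 1 = -a by ring, Real.rpow_neg hw.le, inv_inv, e3]
    have := Real.rpow_pos_of_pos hw (a - 1)
    field_simp
  rw [setLIntegral_congr_fun measurableSet_Ioi h3, lintegral_const_mul' _ _ ENNReal.ofReal_ne_top]
  calc _ ≤ ENNReal.ofReal (B / 2) * 1 := by gcongr
    _ = _ := by
      rw [mul_one, hBval]
      congr 1
      rw [div_div, mul_comm (cos _)]

/-- The one-sided Boole transformation: `y ↦ C² y - S² / y` carries the Cauchy measure to itself,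
and `(y C + S)² / y` dominates `|C² y - S² / y|`. -/
lemma lintegral_boole_le {s C S : ℝ} (hs : 0 < s) (hC : 0 < C) (hS : 0 < S)
    (hCS : C ^ 2 + S ^ 2 = 1) :
    ∫⁻ y in Set.Ioi (0 : ℝ), ENNReal.ofReal ((y / (y * C + S) ^ 2) ^ s / (1 + y ^ 2)) ≤
      ∫⁻ z in Set.Ioi (0 : ℝ), ENNReal.ofReal (z ^ (-s) / (1 + z ^ 2)) := by
  set r : ℝ := S / C with hr
  have hr0 : 0 < r := by positivity
  set h : ℝ → ℝ := fun y => (y / (y * C + S) ^ 2) ^ s / (1 + y ^ 2) with hh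
  -- The contribution of `(0, r)`, transported to `(r, ∞)` by the involution `y ↦ r² / y`.
  have hfold : ∫⁻ y in Set.Ioo 0 r, ENNReal.ofReal (h y) ≤
      ∫⁻ y in Set.Ioi r, ENNReal.ofReal (r ^ 2 / y ^ 2 * h (r ^ 2 / y)) := by
    refine le_trans (le_of_eq ?_) (lintegral_subst_le (s := Set.Ioo 0 r) (t := Set.Ioi r)
      (f := fun y => r ^ 2 / y) (f' := fun y => - (r ^ 2 / y ^ 2)) measurableSet_Ioo ?_ ?_ ?_
      (fun y => ENNReal.ofReal (r ^ 2 / y ^ 2 * h (r ^ 2 / y))))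
    · refine setLIntegral_congr_fun measurableSet_Ioo ?_
      intro y hy
      have hy0 : 0 < y := hy.1
      simp only
      rw [← ENNReal.ofReal_mul (abs_nonneg _), abs_neg, abs_of_pos (by positivity)]
      have e : r ^ 2 / (r ^ 2 / y) = y := by field_simp
      rw [e]
      congr 1
      field_simp
    · intro y hy
      have hy0 : y ≠ 0 := hy.1.ne'
      have := (hasDerivAt_const y (r ^ 2)).div (hasDerivAt_id y) hy0
      refine this.congr_deriv ?_
      simp only [id]
      ring
    · intro x hx y hy hxy
      have hx0 : x ≠ 0 := hx.1.ne'
      have hy0 : y ≠ 0 := hy.1.ne'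
      simp only at hxy
      rw [div_eq_div_iff hx0 hy0] at hxy
      exact (mul_left_cancel₀ (by positivity) hxy).symm
    · intro y hy
      have hy0 : 0 < y := hy.1
      simp only [Set.mem_Ioi]
      rw [lt_div_iff₀ hy0, sq]
      exact mul_lt_mul_of_pos_left hy.2 hr0
  have hmeas : Measurable h := by
    rw [hh]; fun_prop
  have hsplit : ∫⁻ y in Set.Ioi (0 : ℝ), ENNReal.ofReal (h y) =
      (∫⁻ y in Set.Ioo 0 r, ENNReal.ofReal (h y)) + ∫⁻ y in Set.Ioi r, ENNReal.ofReal (h y) := by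
    rw [← Set.Ioc_union_Ioi_eq_Ioi hr0.le, lintegral_union measurableSet_Ioi,
      setLIntegral_congr Ioo_ae_eq_Ioc]
    exact Set.Ioc_disjoint_Ioi le_rfl
  rw [hsplit]
  have hcomb := lintegral_subst_le (s := Set.Ioi r) (t := Set.Ioi (0 : ℝ))
    (f := fun y => C ^ 2 * y - S ^ 2 / y) (f' := fun y => C ^ 2 + S ^ 2 / y ^ 2) measurableSet_Ioi
    (by
      intro y hy
      have hy0 : y ≠ 0 := (hr0.trans hy).ne'
      have := ((hasDerivAt_id y).const_mul (C ^ 2)).sub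
        ((hasDerivAt_const y (S ^ 2)).div (hasDerivAt_id y) hy0)
      refine this.congr_deriv ?_
      simp only [id]
      ring)
    (by
      have hmono : StrictMonoOn (fun y => C ^ 2 * y - S ^ 2 / y) (Set.Ioi r) := by
        intro x hx y hy hxy
        have hx0 : 0 < x := hr0.trans hx
        simp only
        gcongr
      exact hmono.injOn)
    (by
      intro y hy
      have hy0 : 0 < y := hr0.trans hy
      have : S < y * C := by
        rw [Set.mem_Ioi, hr, div_lt_iff₀ hC] at hy
        exact hy
      simp only [Set.mem_Ioi, sub_pos]
      rw [div_lt_iff₀ hy0]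
      nlinarith)
    (fun z => ENNReal.ofReal (z ^ (-s) / (1 + z ^ 2)))
  refine le_trans ?_ hcomb
  calc _ ≤ (∫⁻ y in Set.Ioi r, ENNReal.ofReal (r ^ 2 / y ^ 2 * h (r ^ 2 / y))) +
        ∫⁻ y in Set.Ioi r, ENNReal.ofReal (h y) := by gcongr
    _ = ∫⁻ y in Set.Ioi r, (ENNReal.ofReal (r ^ 2 / y ^ 2 * h (r ^ 2 / y)) +
        ENNReal.ofReal (h y)) := by
      rw [lintegral_add_right _ (by fun_prop)]
    _ ≤ _ := by
      refine setLIntegral_mono' measurableSet_Ioi ?_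
      intro y hy
      have hy0 : 0 < y := hr0.trans hy
      have hyC : S < y * C := by
        rw [Set.mem_Ioi, hr, div_lt_iff₀ hC] at hy
        exact hy
      have hz : 0 < C ^ 2 * y - S ^ 2 / y := by
        rw [sub_pos, div_lt_iff₀ hy0]
        nlinarith
      have hq : (r ^ 2 / y) / ((r ^ 2 / y) * C + S) ^ 2 = y / (y * C + S) ^ 2 := by
        rw [hr]; field_simp; ring
      have hle : (y / (y * C + S) ^ 2) ^ s ≤ (C ^ 2 * y - S ^ 2 / y) ^ (-s) := by
        rw [Real.rpow_neg hz.le, ← Real.inv_rpow hz.le]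
        refine Real.rpow_le_rpow (by positivity) ?_ hs.le
        rw [le_inv_comm₀ (by positivity) hz, inv_div]
        rw [le_div_iff₀ hy0, sub_mul, div_mul_cancel₀ _ hy0.ne']
        nlinarith [mul_pos hy0 (mul_pos hC hS), sq_nonneg S]
      have hdens : r ^ 2 / y ^ 2 / (1 + (r ^ 2 / y) ^ 2) + 1 / (1 + y ^ 2) =
          (C ^ 2 + S ^ 2 / y ^ 2) / (1 + (C ^ 2 * y - S ^ 2 / y) ^ 2) := by
        -- `1 + z² = (C⁴ y² + S⁴) (1 + y²) / y²`, because `C² + S² = 1`.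
        have e1 : 1 + (C ^ 2 * y - S ^ 2 / y) ^ 2 =
            (C ^ 4 * y ^ 2 + S ^ 4) * (1 + y ^ 2) / y ^ 2 := by
          have : S ^ 2 = 1 - C ^ 2 := by linarith
          rw [show S ^ 4 = (S ^ 2) ^ 2 by ring, this]
          field_simp
          ring
        have e2 : r ^ 2 / y ^ 2 / (1 + (r ^ 2 / y) ^ 2) =
            S ^ 2 * C ^ 2 / (C ^ 4 * y ^ 2 + S ^ 4) := by
          rw [hr]; field_simp
        rw [e1, e2]
        have : S ^ 2 = 1 - C ^ 2 := by linarith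
        field_simp
        rw [show S ^ 4 = (S ^ 2) ^ 2 by ring, this]
        ring
      have hnn : 0 ≤ h y := by rw [hh]; positivity
      have hnn' : 0 ≤ h (r ^ 2 / y) := by rw [hh]; positivity
      rw [← ENNReal.ofReal_add (by positivity) hnn, ← ENNReal.ofReal_mul (abs_nonneg _),
        abs_of_pos (by positivity)]
      refine ENNReal.ofReal_le_ofReal ?_
      calc _ = (y / (y * C + S) ^ 2) ^ s *
            (r ^ 2 / y ^ 2 / (1 + (r ^ 2 / y) ^ 2) + 1 / (1 + y ^ 2)) := by
            simp only [hh]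
            rw [hq]
            ring
        _ ≤ (C ^ 2 * y - S ^ 2 / y) ^ (-s) *
            (r ^ 2 / y ^ 2 / (1 + (r ^ 2 / y) ^ 2) + 1 / (1 + y ^ 2)) := by gcongr
        _ = _ := by rw [hdens]; ring

/-- The main integral inequality equivalent to the pointwise Schur-test bound. -/
theorem main_integral_inequality (p : ℝ) (hp : 1 < p)
    (θ : ℝ) (hθ : θ ∈ Set.Ioo (0 : ℝ) π) :
    (∫ y in Set.Ioi (0 : ℝ),
        y ^ (1 / p) /
          ((y ^ 2 + 1) * (y * Real.cos (θ / 2) + Real.sin (θ / 2)) ^ (2 / p))) ≤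
      π / (2 * Real.cos (π / (2 * p)) ^ p) *
        Real.cos (π / (2 * p) - θ / p) ^ (p - 1) := by
  obtain ⟨h0, hπ⟩ := hθ
  have hp0 : 0 < p := by linarith
  have hC : 0 < cos (θ / 2) := cos_pos_of_mem_Ioo ⟨by linarith, by linarith⟩
  have hS : 0 < sin (θ / 2) := sin_pos_of_pos_of_lt_pi (by linarith) (by linarith)
  have hs0 : 0 < 1 / p := by positivity
  have hs1 : 1 / p < 1 := by rw [div_lt_one hp0]; exact hp
  have harg : π / (2 * p) < π / 2 := by
    apply div_lt_div_of_pos_left pi_pos two_pos; linarith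
  have harg0 : 0 < π / (2 * p) := by positivity
  have hc : 0 < cos (π / (2 * p)) := cos_pos_of_mem_Ioo ⟨by linarith, harg⟩
  have hθp : 0 < θ / p := by positivity
  have hθp' : θ / p < 2 * (π / (2 * p)) := by
    rw [show 2 * (π / (2 * p)) = π / p by field_simp]
    gcongr
  have hcos : cos (π / (2 * p)) ≤ cos (π / (2 * p) - θ / p) := by
    rw [← Real.cos_abs (π / (2 * p) - θ / p)]
    refine cos_le_cos_of_nonneg_of_le_pi (abs_nonneg _) (by linarith [pi_pos]) ?_
    rw [abs_le]
    constructor <;> linarith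
  have hrhs : π / (2 * cos (π / (2 * p))) ≤ π / (2 * cos (π / (2 * p)) ^ p) *
      cos (π / (2 * p) - θ / p) ^ (p - 1) := by
    calc π / (2 * cos (π / (2 * p))) =
        π / (2 * cos (π / (2 * p)) ^ p) * cos (π / (2 * p)) ^ (p - 1) := by
          rw [Real.rpow_sub_one hc.ne']
          have := Real.rpow_pos_of_pos hc p
          field_simp
      _ ≤ _ := by
          have := Real.rpow_pos_of_pos hc p
          gcongr
  refine le_trans ?_ hrhs
  have hform : ∀ y ∈ Set.Ioi (0 : ℝ), y ^ (1 / p) /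
      ((y ^ 2 + 1) * (y * cos (θ / 2) + sin (θ / 2)) ^ (2 / p)) =
      (y / (y * cos (θ / 2) + sin (θ / 2)) ^ 2) ^ (1 / p) / (1 + y ^ 2) := by
    intro y hy
    have hy0 : 0 < y := hy
    have hd : 0 < y * cos (θ / 2) + sin (θ / 2) := by positivity
    rw [Real.div_rpow hy0.le (by positivity), ← Real.rpow_natCast (_ + _) 2, ← Real.rpow_mul hd.le,
      div_div, mul_comm, add_comm (1 : ℝ)]
    norm_num [div_eq_mul_inv]
  rw [setIntegral_congr_fun measurableSet_Ioi hform]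
  have hbound := (lintegral_boole_le hs0 hC hS (cos_sq_add_sin_sq _)).trans
    (lintegral_rpow_div_one_add_sq_le hs0 hs1)
  rw [integral_eq_lintegral_of_nonneg_ae]
  · refine ENNReal.toReal_le_of_le_ofReal (by positivity) (hbound.trans (le_of_eq ?_))
    congr 4
    field_simp
  · refine (ae_restrict_iff' measurableSet_Ioi).2 (Filter.Eventually.of_forall ?_)
    intro y hy
    have hy0 : 0 < y := hy
    simp only [Pi.zero_apply]
    positivity
  · exact Measurable.aestronglyMeasurable (by fun_prop)
end
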